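/- Let R₁, R₂ : P₂ → ℝ be Lebesgue measurable and essentially bounded, each satisfying the 6-term equation almost everywhere and the symmetry equation almost everywhere, let C₁, C₂ ∈ ℝ, and let L₁, L₂ : (0,1) → ℝ be Lebesgue measurable solutions of the perturbed Spence-Abel system almost everywhere with data (R₁, C₁) and (R₂, C₂) respectively. Then the essential supremum of |L₁ − L₂| over (0,1) is at most (1 + 16/√3)·(the essential supremum of |R₁ − R₂| over P₂) + (1 + 8/√3)·|C₁ − C₂|. -/

import Mathlib

open MeasureTheory Set

/-- The parameter space `P₂ = {(x,y) : 0 < x < y < 1}`. -/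
def P2 : Set (ℝ × ℝ) := {p | 0 < p.1 ∧ p.1 < p.2 ∧ p.2 < 1}

/-- The parameter space `P₃ = {(x,y,z) : 0 < x < y < z < 1}`. -/
def P3 : Set (ℝ × ℝ × ℝ) := {p | 0 < p.1 ∧ p.1 < p.2.1 ∧ p.2.1 < p.2.2 ∧ p.2.2 < 1}

/-- `L` solves the perturbed Spence–Abel system almost everywhere with data `(R, C)`. -/
def SolvesAE (R : ℝ × ℝ → ℝ) (C : ℝ) (L : ℝ → ℝ) : Prop :=
  (∀ᵐ p ∂(volume.restrict P2),
    L p.1 - L p.2 - L (p.1 / p.2) - L ((p.2 - 1) / (p.1 - 1))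
      + L (p.1 * (p.2 - 1) / (p.2 * (p.1 - 1))) = R p) ∧
  (∀ᵐ x ∂(volume.restrict (Set.Ioo (0:ℝ) 1)), L (1 - x) = C - L x)

/-- `R` satisfies the 6-term equation almost everywhere on `P₃`. -/
def SixTermAE (R : ℝ × ℝ → ℝ) : Prop :=
  ∀ᵐ p ∂(volume.restrict P3),
    R (p.1, p.2.1) - R (p.1, p.2.2) + R (p.2.1, p.2.2)
      - R (p.1 / p.2.2, p.2.1 / p.2.2)
      - R ((p.2.2 - 1) / (p.1 - 1), (p.2.2 - 1) / (p.2.1 - 1))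
      + R (p.1 * (p.2.2 - 1) / (p.2.2 * (p.1 - 1)),
           p.2.1 * (p.2.2 - 1) / (p.2.2 * (p.2.1 - 1))) = 0

/-- `R` satisfies the symmetry equation almost everywhere on `P₂`. -/
def SymmAE (R : ℝ × ℝ → ℝ) : Prop :=
  ∀ᵐ p ∂(volume.restrict P2), R (1 - p.2, (1 - p.2) / (1 - p.1)) = R p

/-!
The difference of two solutions, shifted by a constant, is a function `L` with `L (1 - t) = -L t`
whose five-term expression is bounded by some `M`. Composed with the cross-ratio, such an `L` is an
alternating `GL₂(ℝ)`-invariant 3-cochain `f` on the projective line, and the five-term expression is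
its coboundary, so the task is to bound a cochain by its coboundary.

*Boundedness.* Away from `0` and `1`, a choice of `y` for which the other four arguments of the
five-term relation avoid the superlevel sets of `|L|` bounds `L x`. Near `0`, a telescoping sum of
relations at the points `(x, 1/e)` transports this bound.

*The bound.* Integrate the coboundary over the plane against Gaussian weights. A quadratic weight
that is odd under reflections kills all faces but one, so `f x y`, integrated against it over two
variables, is at most `M`. This integral is essentially the derivative, along hyperbolic rotations,
of the average of `f x y` against `Re w²`, which is therefore within `M` of a constant multiple of
`cos (2 arg x) - cos (2 arg y)`. Such differences cancel in the coboundary, so the average of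
`f x y z` against `Re w²` is at most `4 M`. That average is in turn the derivative of the plain
Gaussian average of `f x y z` along `squeeze`. Finally, every cross-ratio in `(0, 1/2]` is that of
four lines permuted by a quarter turn and a reflection, one triple of which is a squeezed mirror
symmetric triple: its average is small by integration, and the averages of the other triples agree
with it up to sign.
-/

namespace SpenceAbel

section NullSets

variable {E : Type*} [NormedAddCommGroup E] [NormedSpace ℝ E] [FiniteDimensional ℝ E]
  [MeasurableSpace E] [BorelSpace E] {μ : Measure E} [μ.IsAddHaarMeasure]

lemma quasiMeasurePreserving_of_leftInvOn {φ ψ : E → E} {U : Set E} (hφ : Measurable φ)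
    (hU : ∀ᵐ x ∂μ, x ∈ U) (hψ : DifferentiableOn ℝ ψ (φ '' U)) (hinv : LeftInvOn ψ φ U) :
    Measure.QuasiMeasurePreserving φ μ μ := by
  refine ⟨hφ, Measure.AbsolutelyContinuous.mk fun s hs h0 => ?_⟩
  rw [Measure.map_apply hφ hs]
  refine measure_mono_null (t := Uᶜ ∪ ψ '' (s ∩ φ '' U)) (fun x hx => ?_)
    (measure_union_null hU (addHaar_image_eq_zero_of_differentiableOn_of_addHaar_eq_zero μ
      (hψ.mono inter_subset_right) (measure_mono_null inter_subset_left h0)))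
  by_cases hxU : x ∈ U
  · exact Or.inr ⟨φ x, ⟨hx, mem_image_of_mem φ hxU⟩, hinv hxU⟩
  · exact Or.inl hxU

end NullSets

lemma quasiMeasurePreserving_one_sub :
    Measure.QuasiMeasurePreserving (fun t : ℝ => 1 - t) volume volume :=
  (volume.measurePreserving_sub_left (1 : ℝ)).quasiMeasurePreserving

lemma quasiMeasurePreserving_inv :
    Measure.QuasiMeasurePreserving (fun t : ℝ => t⁻¹) volume volume := by
  refine quasiMeasurePreserving_of_leftInvOn (ψ := fun u => u⁻¹) (U := {0}ᶜ) (by fun_prop)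
    (Measure.ae_ne volume 0) ?_ fun t _ => inv_inv t
  rintro _ ⟨t, ht, rfl⟩
  have : t ≠ 0 := ht
  fun_prop (disch := simpa)

lemma quasiMeasurePreserving_sub_mul (b : ℝ) {c : ℝ} (hc : c ≠ 0) :
    Measure.QuasiMeasurePreserving (fun t : ℝ => (t - b) * c) volume volume :=
  quasiMeasurePreserving_of_leftInvOn (ψ := fun u => u / c + b) (U := univ) (by fun_prop)
    (by simp) (by fun_prop) fun t _ => by simp [hc]

lemma ae_fst_ne (c : ℝ) : ∀ᵐ p : ℝ × ℝ, p.1 ≠ c :=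
  Measure.quasiMeasurePreserving_fst.ae (Measure.ae_ne volume c)

lemma ae_snd_ne (c : ℝ) : ∀ᵐ p : ℝ × ℝ, p.2 ≠ c :=
  Measure.quasiMeasurePreserving_snd.ae (Measure.ae_ne volume c)

lemma quasiMeasurePreserving_div :
    Measure.QuasiMeasurePreserving (fun p : ℝ × ℝ => p.1 / p.2) volume volume := by
  have hinv : Measure.QuasiMeasurePreserving (fun p : ℝ × ℝ => (p.1 / p.2, p.2)) volume volume :=
    quasiMeasurePreserving_of_leftInvOn (ψ := fun q => (q.1 * q.2, q.2)) (by fun_prop)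
      (ae_snd_ne 0) (by fun_prop) fun p (hp : p.2 ≠ 0) => by ext <;> simp [hp]
  exact Measure.quasiMeasurePreserving_fst.comp hinv

lemma quasiMeasurePreserving_one_sub_inv :
    Measure.QuasiMeasurePreserving (fun s : ℝ => 1 - s⁻¹) volume volume := by
  refine quasiMeasurePreserving_of_leftInvOn (ψ := fun u => (1 - u)⁻¹) (U := {0}ᶜ) (by fun_prop)
    (Measure.ae_ne volume 0) ?_ fun s _ => by simp
  rintro _ ⟨s, hs, rfl⟩
  have : s ≠ 0 := hs
  fun_prop (disch := simpa)

lemma quasiMeasurePreserving_inv_div :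
    Measure.QuasiMeasurePreserving (fun p : ℝ × ℝ => (p.1⁻¹, p.2 / p.1)) volume volume := by
  refine quasiMeasurePreserving_of_leftInvOn (ψ := fun q => (q.1⁻¹, q.2 / q.1))
    (U := {p | p.1 ≠ 0}) (by fun_prop) (ae_fst_ne 0) ?_ fun p (hp : p.1 ≠ 0) => by ext <;> simp [hp]
  rintro _ ⟨p, hp, rfl⟩
  have : p.1 ≠ 0 := hp
  fun_prop (disch := simpa)

/-- The plane, whose nonzero vectors are homogeneous coordinates on the projective line. -/
abbrev Plane := ℝ × ℝ

/-- The linear map of the plane with matrix `!![a, b; c, d]`. -/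
noncomputable def lin (a b c d : ℝ) : Plane →ₗ[ℝ] Plane :=
  Matrix.toLin (.finTwoProd ℝ) (.finTwoProd ℝ) !![a, b; c, d]

/-- The area form of the plane. -/
def det (x y : Plane) : ℝ := x.1 * y.2 - x.2 * y.1

section Plane

variable {a b c d : ℝ}

lemma lin_apply (w : Plane) : lin a b c d w = (a * w.1 + b * w.2, c * w.1 + d * w.2) :=
  Matrix.toLin_finTwoProd_apply a b c d w

@[fun_prop]
lemma measurable_lin : Measurable (lin a b c d) :=
  (LinearMap.continuous_of_finiteDimensional _).measurable

lemma map_lin_volume (h : a * d - b * c ≠ 0) :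
    Measure.map (lin a b c d) volume = ENNReal.ofReal |(a * d - b * c)⁻¹| • volume := by
  have hdet : LinearMap.det (lin a b c d) = a * d - b * c := by
    rw [lin, LinearMap.det_toLin, Matrix.det_fin_two_of]
  rw [← hdet] at h ⊢
  exact Measure.map_linearMap_addHaar_eq_smul_addHaar volume h

lemma measurePreserving_lin (h : |a * d - b * c| = 1) :
    MeasurePreserving (lin a b c d) volume volume := by
  refine ⟨measurable_lin, ?_⟩
  rw [map_lin_volume (abs_pos.1 (by rw [h]; exact one_pos)), abs_inv, h]
  simp

lemma quasiMeasurePreserving_lin (h : a * d - b * c ≠ 0) :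
    Measure.QuasiMeasurePreserving (lin a b c d) volume volume := by
  refine ⟨measurable_lin, ?_⟩
  rw [map_lin_volume h]
  exact Measure.smul_absolutelyContinuous

lemma det_lin (x y : Plane) :
    det (lin a b c d x) (lin a b c d y) = (a * d - b * c) * det x y := by
  simp only [det, lin_apply]; ring

lemma det_swap (x y : Plane) : det y x = -det x y := by simp only [det]; ring

lemma det_self (x : Plane) : det x x = 0 := by simp only [det]; ring

lemma det_smul_left (r : ℝ) (x y : Plane) : det (r • x) y = r * det x y := by
  simp only [det, Prod.smul_fst, Prod.smul_snd, smul_eq_mul]; ring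

lemma det_plucker (x y z w : Plane) :
    det x y * det z w - det x z * det y w + det x w * det y z = 0 := by
  simp only [det]; ring

lemma left_ne_zero_of_det_ne_zero {x y : Plane} (h : det x y ≠ 0) : x ≠ 0 := by
  rintro rfl; simp [det] at h

lemma ae_det_ne_zero {x : Plane} (hx : x ≠ 0) : ∀ᵐ v : Plane, det x v ≠ 0 := by
  have hsq : x.1 * x.1 - x.2 * -x.2 ≠ 0 := fun h =>
    hx (Prod.ext (by nlinarith [sq_nonneg x.1, sq_nonneg x.2] : x.1 = 0)
      (by nlinarith [sq_nonneg x.1, sq_nonneg x.2] : x.2 = 0))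
  filter_upwards [(quasiMeasurePreserving_lin hsq).ae (ae_snd_ne 0)] with v hv h0
  exact hv (by simp only [lin_apply, det] at h0 ⊢; linarith)

end Plane

/-- The cross-ratio of four points of the projective line, given by homogeneous coordinates and
normalised so that `crossRatio ∞ 0 1 t = t`. -/
noncomputable def crossRatio (x y z w : Plane) : ℝ :=
  det x z * det y w / (det x w * det y z)

lemma crossRatio_lin {a b c d : ℝ} (h : a * d - b * c ≠ 0) (x y z w : Plane) :
    crossRatio (lin a b c d x) (lin a b c d y) (lin a b c d z) (lin a b c d w) =
      crossRatio x y z w := by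
  simp only [crossRatio, det_lin, mul_mul_mul_comm (a * d - b * c)]
  exact mul_div_mul_left _ _ (mul_ne_zero h h)

lemma crossRatio_smul {r : ℝ} (h : r ≠ 0) (x y z w : Plane) :
    crossRatio (r • x) y z w = crossRatio x y z w := by
  simp only [crossRatio, det_smul_left, mul_assoc r]
  exact mul_div_mul_left _ _ h

lemma crossRatio_swap₁₂ (x y z w : Plane) : crossRatio y x z w = (crossRatio x y z w)⁻¹ := by
  simp only [crossRatio, inv_div]; ring

lemma crossRatio_swap₃₄ (x y z w : Plane) : crossRatio x y w z = (crossRatio x y z w)⁻¹ := by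
  simp only [crossRatio, inv_div]

lemma crossRatio_swap₂₃ {x y z w : Plane} (hxw : det x w ≠ 0) (hyz : det y z ≠ 0) :
    crossRatio x z y w = 1 - crossRatio x y z w := by
  rw [crossRatio, crossRatio, det_swap y z]
  field_simp
  linear_combination -det_plucker x y z w

/-- The extension of `L : (0, 1) → ℝ` to the real line for which `L t⁻¹ = -L t`; it inherits
`L (1 - t) = -L t` from `L`. -/
noncomputable def extend (L : ℝ → ℝ) (t : ℝ) : ℝ :=
  if t ∈ Ioo 0 1 then L t else if 1 < t then -L t⁻¹ else if t < 0 then L (1 - t)⁻¹ else 0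

section Extend

variable {L : ℝ → ℝ} {t : ℝ}

lemma extend_of_mem_Ioo (h : t ∈ Ioo 0 1) : extend L t = L t := if_pos h

lemma extend_of_one_lt (h : 1 < t) : extend L t = -L t⁻¹ := by simp [extend, h, h.le]

lemma extend_of_neg (h : t < 0) : extend L t = L (1 - t)⁻¹ := by
  have h1 : ¬ 1 < t := by linarith
  simp [extend, h, h.le, h1]

@[simp] lemma extend_zero : extend L 0 = 0 := by simp [extend]

@[simp] lemma extend_one : extend L 1 = 0 := by simp [extend]

lemma extend_one_sub (hL : ∀ t, L (1 - t) = -L t) (t : ℝ) :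
    extend L (1 - t) = -extend L t := by
  rcases lt_trichotomy t 0 with h | rfl | h
  · rw [extend_of_neg h, extend_of_one_lt (by linarith)]
  · simp
  rcases lt_trichotomy t 1 with h' | rfl | h'
  · rw [extend_of_mem_Ioo ⟨h, h'⟩, extend_of_mem_Ioo ⟨by linarith, by linarith⟩, hL]
  · simp
  · rw [extend_of_one_lt h', extend_of_neg (by linarith)]; simp

lemma extend_inv (hL : ∀ t, L (1 - t) = -L t) (t : ℝ) : extend L t⁻¹ = -extend L t := by
  rcases lt_trichotomy t 0 with h | rfl | h
  · have h0 : t ≠ 0 := h.ne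
    have h1 : 1 - t ≠ 0 := by linarith
    have h2 : (1 - t⁻¹)⁻¹ = 1 - (1 - t)⁻¹ := by
      rw [show 1 - t⁻¹ = -(1 - t) / t by field_simp; ring, inv_div]
      field_simp
      ring
    rw [extend_of_neg h, extend_of_neg (inv_lt_zero.2 h), h2, hL]
  · simp
  rcases lt_trichotomy t 1 with h' | rfl | h'
  · rw [extend_of_mem_Ioo ⟨h, h'⟩, extend_of_one_lt (one_lt_inv_iff₀.2 ⟨h, h'⟩), inv_inv]
  · simp
  · rw [extend_of_one_lt h', extend_of_mem_Ioo ⟨inv_pos.2 h, inv_lt_one_of_one_lt₀ h'⟩, neg_neg]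

lemma measurable_extend (hL : Measurable L) : Measurable (extend L) :=
  hL.ite measurableSet_Ioo <| Measurable.ite measurableSet_Ioi (by fun_prop) <|
    Measurable.ite measurableSet_Iio (by fun_prop) measurable_const

lemma abs_extend_le {S : ℝ} (hL : ∀ t, |L t| ≤ S) (t : ℝ) : |extend L t| ≤ S := by
  have := (abs_nonneg _).trans (hL 0)
  unfold extend
  split_ifs <;> simp [hL, this]

end Extend

/-- The alternating sum of `f` over the faces of a 4-simplex. -/
def coboundary (f : Plane → Plane → Plane → Plane → ℝ) (x y z w v : Plane) : ℝ :=
  f y z w v - f x z w v + f x y w v - f x y z v + f x y z w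

/-- An alternating, `GL₂(ℝ)`-invariant 3-cochain on the projective line, as a function of
homogeneous coordinates. -/
structure ProjectiveCochain (f : Plane → Plane → Plane → Plane → ℝ) : Prop where
  swap₁₂ : ∀ x y z w, f y x z w = -f x y z w
  swap₂₃ : ∀ x y z w, f x z y w = -f x y z w
  swap₃₄ : ∀ x y z w, f x y w z = -f x y z w
  lin : ∀ {a b c d : ℝ}, a * d - b * c ≠ 0 → ∀ x y z w,
    f (lin a b c d x) (lin a b c d y) (lin a b c d z) (lin a b c d w) = f x y z w
  smul₁ : ∀ {r : ℝ}, r ≠ 0 → ∀ x y z w, f (r • x) y z w = f x y z w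

/-- The absolute value of the coboundary of `f` at the points `∞, 0, 1, s, t`. -/
def defect (f : Plane → Plane → Plane → Plane → ℝ) (s t : ℝ) : ℝ :=
  |coboundary f (1, 0) (0, 1) (1, 1) (s, 1) (t, 1)|

namespace ProjectiveCochain

variable {f : Plane → Plane → Plane → Plane → ℝ} (hf : ProjectiveCochain f) {M : ℝ}

include hf

lemma smul₂ {r : ℝ} (hr : r ≠ 0) (x y z w : Plane) : f x (r • y) z w = f x y z w := by
  rw [hf.swap₁₂, hf.smul₁ hr, hf.swap₁₂ x y, neg_neg]

lemma smul₃ {r : ℝ} (hr : r ≠ 0) (x y z w : Plane) : f x y (r • z) w = f x y z w := by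
  rw [hf.swap₂₃, hf.smul₂ hr, hf.swap₂₃ x y, neg_neg]

lemma smul₄ {r : ℝ} (hr : r ≠ 0) (x y z w : Plane) : f x y z (r • w) = f x y z w := by
  rw [hf.swap₃₄, hf.smul₃ hr, hf.swap₃₄ x y z, neg_neg]

lemma abs_coboundary_swap₁₂ (x y z w v : Plane) :
    |coboundary f y x z w v| = |coboundary f x y z w v| := by
  rw [← abs_neg, coboundary, coboundary, hf.swap₁₂ x y w v, hf.swap₁₂ x y z v, hf.swap₁₂ x y z w]
  ring_nf

lemma abs_coboundary_swap₂₃ (x y z w v : Plane) :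
    |coboundary f x z y w v| = |coboundary f x y z w v| := by
  rw [← abs_neg, coboundary, coboundary, hf.swap₁₂ y z w v, hf.swap₂₃ x y z v, hf.swap₂₃ x y z w]
  ring_nf

lemma abs_coboundary_swap₃₄ (x y z w v : Plane) :
    |coboundary f x y w z v| = |coboundary f x y z w v| := by
  rw [← abs_neg, coboundary, coboundary, hf.swap₂₃ y z w v, hf.swap₂₃ x z w v, hf.swap₃₄ x y z w]
  ring_nf

lemma abs_coboundary_swap₄₅ (x y z w v : Plane) :
    |coboundary f x y z v w| = |coboundary f x y z w v| := by
  rw [← abs_neg, coboundary, coboundary, hf.swap₃₄ y z w v, hf.swap₃₄ x z w v, hf.swap₃₄ x y w v]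
  ring_nf

lemma coboundary_lin {a b c d : ℝ} (h : a * d - b * c ≠ 0) (x y z w v : Plane) :
    coboundary f (SpenceAbel.lin a b c d x) (SpenceAbel.lin a b c d y) (SpenceAbel.lin a b c d z)
      (SpenceAbel.lin a b c d w) (SpenceAbel.lin a b c d v) = coboundary f x y z w v := by
  simp only [coboundary, hf.lin h]

lemma abs_coboundary_smul₁ {r : ℝ} (hr : r ≠ 0) (x y z w v : Plane) :
    |coboundary f (r • x) y z w v| = |coboundary f x y z w v| := by
  simp only [coboundary, hf.smul₁ hr]

lemma abs_coboundary_smul₂ {r : ℝ} (hr : r ≠ 0) (x y z w v : Plane) :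
    |coboundary f x (r • y) z w v| = |coboundary f x y z w v| := by
  rw [hf.abs_coboundary_swap₁₂, hf.abs_coboundary_smul₁ hr, hf.abs_coboundary_swap₁₂]

lemma abs_coboundary_smul₃ {r : ℝ} (hr : r ≠ 0) (x y z w v : Plane) :
    |coboundary f x y (r • z) w v| = |coboundary f x y z w v| := by
  rw [hf.abs_coboundary_swap₂₃, hf.abs_coboundary_smul₂ hr, hf.abs_coboundary_swap₂₃]

lemma abs_coboundary_smul₄ {r : ℝ} (hr : r ≠ 0) (x y z w v : Plane) :
    |coboundary f x y z (r • w) v| = |coboundary f x y z w v| := by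
  rw [hf.abs_coboundary_swap₃₄, hf.abs_coboundary_smul₃ hr, hf.abs_coboundary_swap₃₄]

lemma abs_coboundary_smul₅ {r : ℝ} (hr : r ≠ 0) (x y z w v : Plane) :
    |coboundary f x y z w (r • v)| = |coboundary f x y z w v| := by
  rw [hf.abs_coboundary_swap₄₅, hf.abs_coboundary_smul₄ hr, hf.abs_coboundary_swap₄₅]

lemma defect_swap (s t : ℝ) : defect f t s = defect f s t := hf.abs_coboundary_swap₄₅ _ _ _ _ _

lemma defect_one_sub (s t : ℝ) : defect f (1 - s) (1 - t) = defect f s t := by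
  rw [defect, defect, ← hf.coboundary_lin (a := -1) (b := 1) (c := 0) (d := 1) (by norm_num)
    (1, 0) (0, 1) (1, 1) (s, 1) (t, 1), ← hf.abs_coboundary_smul₁ (r := -1) (by norm_num),
    hf.abs_coboundary_swap₂₃]
  simp [lin_apply, neg_add_eq_sub]

lemma defect_inv_div {s : ℝ} (hs : s ≠ 0) (t : ℝ) : defect f s⁻¹ (t / s) = defect f s t := by
  rw [defect, defect, ← hf.coboundary_lin (a := s⁻¹) (b := 0) (c := 0) (d := 1) (by simpa)
    (1, 0) (0, 1) (1, 1) (s, 1) (t, 1), ← hf.abs_coboundary_smul₁ (inv_ne_zero hs),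
    hf.abs_coboundary_swap₃₄]
  simp [lin_apply, hs, div_eq_inv_mul]

lemma defect_one_sub_inv {s t : ℝ} (hs : s ≠ 0) (ht : t ≠ 0) :
    defect f (1 - s⁻¹) (1 - t⁻¹) = defect f s t := by
  rw [defect, defect, ← hf.coboundary_lin (a := 1) (b := -1) (c := 1) (d := 0) (by norm_num)
    (1, 0) (0, 1) (1, 1) (s, 1) (t, 1), hf.abs_coboundary_swap₂₃ _ (1, 1) (0, 1),
    hf.abs_coboundary_swap₁₂, ← hf.abs_coboundary_smul₂ (r := -1) (by norm_num) _ (1, 0),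
    ← hf.abs_coboundary_smul₄ hs _ _ _ (1 - s⁻¹, 1), ← hf.abs_coboundary_smul₅ ht]
  simp [lin_apply, mul_add, hs, ht, sub_eq_add_neg]

lemma ae_defect_le_of_mem_Ioo (h : ∀ᵐ p : ℝ × ℝ, p ∈ P2 → defect f p.1 p.2 ≤ M) :
    ∀ᵐ p : ℝ × ℝ, p.1 ∈ Ioo 0 1 → defect f p.1 p.2 ≤ M := by
  have square : ∀ᵐ p : ℝ × ℝ, p.1 ∈ Ioo 0 1 → p.2 ∈ Ioo 0 1 → defect f p.1 p.2 ≤ M := by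
    filter_upwards [h, Measure.measurePreserving_swap.quasiMeasurePreserving.ae h,
      quasiMeasurePreserving_div.ae (Measure.ae_ne volume 1)] with p hlt hgt hne h1 h2
    rcases lt_trichotomy p.1 p.2 with h' | h' | h'
    · exact hlt ⟨h1.1, h', h2.2⟩
    · exact absurd (by rw [h', div_self h2.1.ne']) hne
    · rw [← hf.defect_swap]; exact hgt ⟨h2.1, h', h1.2⟩
  have gt_gt : ∀ᵐ p : ℝ × ℝ, 1 < p.1 → 1 < p.2 → defect f p.1 p.2 ≤ M := by
    filter_upwards [(QuasiMeasurePreserving.prodMap quasiMeasurePreserving_one_sub_inv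
      quasiMeasurePreserving_one_sub_inv).ae square] with p hp h1 h2
    have key {s : ℝ} (hs : 1 < s) : 1 - s⁻¹ ∈ Ioo 0 1 :=
      ⟨sub_pos.2 (inv_lt_one_of_one_lt₀ hs), sub_lt_self _ (by positivity)⟩
    rw [← hf.defect_one_sub_inv (by linarith) (by linarith)]
    exact hp (key h1) (key h2)
  have unit_gt : ∀ᵐ p : ℝ × ℝ, p.1 ∈ Ioo 0 1 → 1 < p.2 → defect f p.1 p.2 ≤ M := by
    filter_upwards [quasiMeasurePreserving_inv_div.ae gt_gt] with p hp h1 h2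
    rw [← hf.defect_inv_div h1.1.ne']
    exact hp (one_lt_inv_iff₀.2 h1) ((one_lt_div h1.1).2 (h1.2.trans h2))
  have reflect := QuasiMeasurePreserving.prodMap quasiMeasurePreserving_one_sub
    quasiMeasurePreserving_one_sub
  filter_upwards [square, unit_gt, reflect.ae unit_gt, ae_snd_ne 0, ae_snd_ne 1] with p h_unit h_gt
    h_neg h0 h1 hp
  rcases lt_or_gt_of_ne h0 with h0 | h0
  · rw [← hf.defect_one_sub]
    exact h_neg ⟨sub_pos.2 hp.2, sub_lt_self _ hp.1⟩ (by simp only [Prod.map]; linarith)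
  rcases lt_or_gt_of_ne h1 with h1 | h1
  · exact h_unit hp ⟨h0, h1⟩
  · exact h_gt hp h1

lemma ae_defect_le (h : ∀ᵐ p : ℝ × ℝ, p ∈ P2 → defect f p.1 p.2 ≤ M) :
    ∀ᵐ p : ℝ × ℝ, defect f p.1 p.2 ≤ M := by
  have rotate := QuasiMeasurePreserving.prodMap quasiMeasurePreserving_one_sub_inv
    quasiMeasurePreserving_one_sub_inv
  have unit := hf.ae_defect_le_of_mem_Ioo h
  have gt : ∀ᵐ p : ℝ × ℝ, 1 < p.1 → defect f p.1 p.2 ≤ M := by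
    filter_upwards [rotate.ae unit, ae_snd_ne 0] with p hp h2 h1
    rw [← hf.defect_one_sub_inv (by linarith) h2]
    exact hp ⟨sub_pos.2 (inv_lt_one_of_one_lt₀ h1), sub_lt_self _ (by positivity)⟩
  filter_upwards [unit, gt, rotate.ae gt, ae_fst_ne 0, ae_fst_ne 1, ae_snd_ne 0] with p h_unit h_gt
    h_neg h0 h1 h2
  rcases lt_or_gt_of_ne h0 with h0 | h0
  · rw [← hf.defect_one_sub_inv h0.ne h2]
    exact h_neg (by simp only [Prod.map]; linarith [inv_lt_zero.2 h0])
  rcases lt_or_gt_of_ne h1 with h1 | h1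
  · exact h_unit ⟨h0, h1⟩
  · exact h_gt h1

end ProjectiveCochain

/-- The linear map sending `x, y, z` to multiples of `(1, 0), (0, 1), (1, 1)`, that is, to
`∞, 0, 1`. -/
noncomputable def normalize (x y z : Plane) : Plane →ₗ[ℝ] Plane :=
  lin (-(y.2 * det x z)) (y.1 * det x z) (-(x.2 * det y z)) (x.1 * det y z)

section Normalize

variable {f : Plane → Plane → Plane → Plane → ℝ} {M : ℝ} {x y z : Plane}

lemma normalize_apply (x y z w : Plane) :
    normalize x y z w = (det x z * det y w, det x w * det y z) := by
  rw [normalize, lin_apply]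
  ext <;> simp only [det] <;> ring

lemma normalize_det_ne_zero (hxy : det x y ≠ 0) (hxz : det x z ≠ 0) (hyz : det y z ≠ 0) :
    -(y.2 * det x z) * (x.1 * det y z) - y.1 * det x z * -(x.2 * det y z) ≠ 0 := by
  have : -(y.2 * det x z) * (x.1 * det y z) - y.1 * det x z * -(x.2 * det y z) =
    -(det x z * det y z * det x y) := by simp only [det]; ring
  rw [this, neg_ne_zero]
  exact mul_ne_zero (mul_ne_zero hxz hyz) hxy

lemma normalize_eq_smul_crossRatio {w : Plane} (hyz : det y z ≠ 0) (hw : det x w ≠ 0) :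
    normalize x y z w = (det x w * det y z) • (crossRatio x y z w, 1) := by
  rw [normalize_apply, crossRatio]
  ext <;> simp only [Prod.smul_mk, smul_eq_mul] <;> field_simp

lemma ProjectiveCochain.abs_coboundary_eq_defect (hf : ProjectiveCochain f) {w v : Plane}
    (hxy : det x y ≠ 0) (hxz : det x z ≠ 0) (hyz : det y z ≠ 0) (hw : det x w ≠ 0)
    (hv : det x v ≠ 0) :
    |coboundary f x y z w v| = defect f (crossRatio x y z w) (crossRatio x y z v) := by
  have hx : normalize x y z x = (-(det x z * det x y)) • (1, 0) := by
    rw [normalize_apply, det_self, det_swap x y]; simp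
  have hy : normalize x y z y = (det x y * det y z) • (0, 1) := by
    rw [normalize_apply, det_self]; simp
  have hz : normalize x y z z = (det x z * det y z) • (1, 1) := by
    rw [normalize_apply]; simp
  rw [← hf.coboundary_lin (normalize_det_ne_zero hxy hxz hyz), ← normalize, hx, hy, hz,
    normalize_eq_smul_crossRatio hyz hw, normalize_eq_smul_crossRatio hyz hv,
    hf.abs_coboundary_smul₁ (by simp [hxy, hxz]), hf.abs_coboundary_smul₂ (by simp [hxy, hyz]),
    hf.abs_coboundary_smul₃ (by simp [hxz, hyz]), hf.abs_coboundary_smul₄ (by simp [hw, hyz]),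
    hf.abs_coboundary_smul₅ (by simp [hv, hyz]), defect]

lemma quasiMeasurePreserving_crossRatio (hxy : det x y ≠ 0) (hxz : det x z ≠ 0)
    (hyz : det y z ≠ 0) :
    Measure.QuasiMeasurePreserving (crossRatio x y z) volume volume := by
  have h := quasiMeasurePreserving_div.comp
    (quasiMeasurePreserving_lin (normalize_det_ne_zero hxy hxz hyz))
  convert h using 1
  ext w
  rw [Function.comp_apply, ← normalize, normalize_apply, crossRatio]

lemma ProjectiveCochain.ae_abs_coboundary_le (hf : ProjectiveCochain f)
    (h : ∀ᵐ p : ℝ × ℝ, defect f p.1 p.2 ≤ M) (hxy : det x y ≠ 0) (hxz : det x z ≠ 0)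
    (hyz : det y z ≠ 0) : ∀ᵐ p : Plane × Plane, |coboundary f x y z p.1 p.2| ≤ M := by
  have hcr := quasiMeasurePreserving_crossRatio hxy hxz hyz
  have hdet := ae_det_ne_zero (left_ne_zero_of_det_ne_zero hxy)
  filter_upwards [(QuasiMeasurePreserving.prodMap hcr hcr).ae h,
    Measure.quasiMeasurePreserving_fst.ae hdet, Measure.quasiMeasurePreserving_snd.ae hdet]
    with p hp h1 h2
  rwa [hf.abs_coboundary_eq_defect hxy hxz hyz h1 h2]

lemma ProjectiveCochain.ae_forall_ae_abs_coboundary_le (hf : ProjectiveCochain f)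
    (h : ∀ᵐ p : ℝ × ℝ, defect f p.1 p.2 ≤ M) :
    ∀ᵐ s : ℝ, ∀ x y z w : Plane, det x y ≠ 0 → det x z ≠ 0 → det y z ≠ 0 → det x w ≠ 0 →
      crossRatio x y z w = s → ∀ᵐ v : Plane, |coboundary f x y z w v| ≤ M := by
  filter_upwards [Measure.ae_ae_of_ae_prod h] with s hs x y z w hxy hxz hyz hxw rfl
  filter_upwards [(quasiMeasurePreserving_crossRatio hxy hxz hyz).ae hs,
    ae_det_ne_zero (left_ne_zero_of_det_ne_zero hxy)] with v hv hxv
  rwa [hf.abs_coboundary_eq_defect hxy hxz hyz hxw hxv]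

end Normalize

/-- The left-hand side of the Spence–Abel five-term equation. -/
noncomputable def fiveTerm (L : ℝ → ℝ) (p : ℝ × ℝ) : ℝ :=
  L p.1 - L p.2 - L (p.1 / p.2) - L ((p.2 - 1) / (p.1 - 1))
    + L (p.1 * (p.2 - 1) / (p.2 * (p.1 - 1)))

/-- The cochain of the projective line obtained by evaluating `L` at the cross-ratio. -/
noncomputable def cochain (L : ℝ → ℝ) (x y z w : Plane) : ℝ := extend L (crossRatio x y z w)

section Cochain

variable {L : ℝ → ℝ} {x y : ℝ}

lemma div_mem_Ioo (h : (x, y) ∈ P2) : x / y ∈ Ioo 0 1 :=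
  ⟨div_pos h.1 (h.1.trans h.2.1), (div_lt_one (h.1.trans h.2.1)).2 h.2.1⟩

lemma sub_one_div_mem_Ioo (h : (x, y) ∈ P2) : (y - 1) / (x - 1) ∈ Ioo 0 1 := by
  obtain ⟨h0, h1, h2⟩ := h
  simp only at h0 h1 h2
  exact ⟨div_pos_of_neg_of_neg (by linarith) (by linarith),
    (div_lt_one_of_neg (by linarith)).2 (by linarith)⟩

lemma fifth_mem_Ioo (h : (x, y) ∈ P2) : x * (y - 1) / (y * (x - 1)) ∈ Ioo 0 1 := by
  obtain ⟨h0, h1, h2⟩ := h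
  simp only at h0 h1 h2
  have hden : y * (x - 1) < 0 := mul_neg_of_pos_of_neg (h0.trans h1) (by linarith)
  exact ⟨div_pos_of_neg_of_neg (mul_neg_of_pos_of_neg h0 (by linarith)) hden,
    (div_lt_one_of_neg hden).2 (by linarith)⟩

lemma projectiveCochain_cochain (hL : ∀ t, L (1 - t) = -L t) : ProjectiveCochain (cochain L) where
  swap₁₂ x y z w := by rw [cochain, crossRatio_swap₁₂, extend_inv hL, cochain]
  swap₃₄ x y z w := by rw [cochain, crossRatio_swap₃₄, extend_inv hL, cochain]
  swap₂₃ x y z w := by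
    by_cases h : det x w * det y z = 0
    · rw [cochain, cochain, crossRatio, crossRatio, h, det_swap y z, mul_neg, h]; simp
    · rw [mul_eq_zero, not_or] at h
      rw [cochain, crossRatio_swap₂₃ h.1 h.2, extend_one_sub hL, cochain]
  lin h x y z w := by rw [cochain, crossRatio_lin h, cochain]
  smul₁ hr x y z w := by rw [cochain, crossRatio_smul hr, cochain]

lemma measurable_cochain (hL : Measurable L) :
    Measurable fun p : Plane × Plane × Plane × Plane => cochain L p.1 p.2.1 p.2.2.1 p.2.2.2 := by
  unfold cochain crossRatio det
  exact (measurable_extend hL).comp (by fun_prop)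

lemma defect_cochain (hL : ∀ t, L (1 - t) = -L t) (h : (x, y) ∈ P2) :
    defect (cochain L) x y = |fiveTerm L (x, y)| := by
  have hx : x ∈ Ioo 0 1 := ⟨h.1, h.2.1.trans h.2.2⟩
  have hy : y ∈ Ioo 0 1 := ⟨h.1.trans h.2.1, h.2.2⟩
  have e1 : crossRatio (0, 1) (1, 1) (x, 1) (y, 1) = x * (y - 1) / (y * (x - 1)) := by
    simp only [crossRatio, det]; ring_nf
  have e2 : crossRatio (1, 0) (1, 1) (x, 1) (y, 1) = (y - 1) / (x - 1) := by
    rw [← neg_div_neg_eq]; simp [crossRatio, det]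
  have e3 : crossRatio (1, 0) (0, 1) (x, 1) (y, 1) = (x / y)⁻¹ := by simp [crossRatio, det]
  have e4 (t : ℝ) : crossRatio (1, 0) (0, 1) (1, 1) (t, 1) = t := by simp [crossRatio, det]
  rw [defect, coboundary, fiveTerm]
  simp only [cochain, e1, e2, e3, e4, extend_inv hL, extend_of_mem_Ioo hx, extend_of_mem_Ioo hy,
    extend_of_mem_Ioo (div_mem_Ioo h), extend_of_mem_Ioo (sub_one_div_mem_Ioo h),
    extend_of_mem_Ioo (fifth_mem_Ioo h)]
  ring_nf

lemma ae_defect_cochain_le (hL : ∀ t, L (1 - t) = -L t) {M : ℝ}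
    (h : ∀ᵐ p : ℝ × ℝ, p ∈ P2 → |fiveTerm L p| ≤ M) :
    ∀ᵐ p : ℝ × ℝ, defect (cochain L) p.1 p.2 ≤ M := by
  refine (projectiveCochain_cochain hL).ae_defect_le ?_
  filter_upwards [h] with p hp hP2
  rw [defect_cochain hL hP2]
  exact hp hP2

end Cochain

section ExpIntegrable

variable {α : Type*} [MeasurableSpace α] {μ : Measure α} {n m k q F : α → ℝ} {A ε κ : ℝ}

/-- A weight `n ≥ 0` growing fast enough for every `exp (-ε n)` to be integrable; it dominates the
exponents of the Gaussian integrals below. -/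
structure ExpIntegrable (n : α → ℝ) (μ : Measure α) : Prop where
  measurable : Measurable n
  nonneg : ∀ w, 0 ≤ n w
  integrable_exp_neg : ∀ {ε : ℝ}, 0 < ε → Integrable (fun w => Real.exp (-(ε * n w))) μ

lemma one_add_sq_le_exp (hε : 0 < ε) {t : ℝ} (ht : 0 ≤ t) :
    (1 + t) ^ 2 ≤ (1 + 4 / ε) ^ 2 * Real.exp (ε / 2 * t) := by
  have hlin : 1 + t ≤ (1 + 4 / ε) * Real.exp (ε / 4 * t) := calc
    1 + t ≤ (1 + 4 / ε) * (ε / 4 * t + 1) := by field_simp; nlinarith [mul_nonneg hε.le ht]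
    _ ≤ _ := by gcongr; exact Real.add_one_le_exp _
  calc (1 + t) ^ 2 ≤ ((1 + 4 / ε) * Real.exp (ε / 4 * t)) ^ 2 := by gcongr
    _ = _ := by rw [mul_pow, ← Real.exp_nat_mul]; push_cast; ring_nf

namespace ExpIntegrable

lemma integrable_sq_mul_exp_neg (hn : ExpIntegrable n μ) (hε : 0 < ε) :
    Integrable (fun w => (1 + n w) ^ 2 * Real.exp (-(ε * n w))) μ := by
  have hnm := hn.measurable
  refine ((hn.integrable_exp_neg (half_pos hε)).const_mul ((1 + 4 / ε) ^ 2)).mono'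
    (by fun_prop) (ae_of_all _ fun w => ?_)
  rw [Real.norm_of_nonneg (by positivity)]
  calc (1 + n w) ^ 2 * Real.exp (-(ε * n w))
      ≤ (1 + 4 / ε) ^ 2 * Real.exp (ε / 2 * n w) * Real.exp (-(ε * n w)) := by
        gcongr; exact one_add_sq_le_exp hε (hn.nonneg w)
    _ = _ := by rw [mul_assoc, ← Real.exp_add]; ring_nf

lemma integrable_mul_exp_neg (hn : ExpIntegrable n μ) (hε : 0 < ε) (hF : Measurable F)
    (hFA : ∀ w, |F w| ≤ A * (1 + n w) ^ 2) (hq : Measurable q) (hnq : ∀ w, ε * n w ≤ q w) :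
    Integrable (fun w => F w * Real.exp (-q w)) μ := by
  refine ((hn.integrable_sq_mul_exp_neg hε).const_mul A).mono' (by fun_prop)
    (ae_of_all _ fun w => ?_)
  rw [norm_mul, Real.norm_of_nonneg (Real.exp_pos _).le, ← mul_assoc]
  have := hnq w
  exact mul_le_mul (hFA w) (by gcongr) (Real.exp_pos _).le ((abs_nonneg _).trans (hFA w))

lemma prod {β : Type*} [MeasurableSpace β] {ν : Measure β} [SFinite μ] [SFinite ν] {m : β → ℝ}
    (hn : ExpIntegrable n μ) (hm : ExpIntegrable m ν) :
    ExpIntegrable (fun p => n p.1 + m p.2) (μ.prod ν) where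
  measurable := (hn.measurable.comp measurable_fst).add (hm.measurable.comp measurable_snd)
  nonneg p := add_nonneg (hn.nonneg _) (hm.nonneg _)
  integrable_exp_neg hε := by
    simpa only [mul_add, neg_add, Real.exp_add] using
      (hn.integrable_exp_neg hε).mul_prod (hm.integrable_exp_neg hε)

lemma le_exponent (hn : ExpIntegrable n μ) (hmn : ∀ w, |m w| ≤ n w) (hkn : ∀ w, |k w| ≤ κ * n w)
    {a b : ℝ} (h : ε + κ + |b| ≤ a) (w : α) : ε * n w ≤ a * n w + b * m w + k w := by
  have hbm : |b * m w| ≤ |b| * n w := by rw [abs_mul]; gcongr; exact hmn w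
  nlinarith [neg_abs_le (b * m w), neg_abs_le (k w), hkn w, hn.nonneg w]

lemma abs_mul_slope_le (hn : ExpIntegrable n μ) (hFA : ∀ w, |F w| ≤ A * (1 + n w))
    (hmn : ∀ w, |m w| ≤ n w) {a b B : ℝ} (h : |a| + |b| ≤ B) (w : α) :
    |F w * (a * n w + b * m w)| ≤ A * B * (1 + n w) ^ 2 := by
  have hn0 := hn.nonneg w
  have hlin : |a * n w + b * m w| ≤ B * (1 + n w) := calc
    _ ≤ |a| * n w + |b| * n w := by
      refine (abs_add_le _ _).trans ?_
      rw [abs_mul, abs_mul, abs_of_nonneg hn0]; gcongr; exact hmn w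
    _ ≤ B * (1 + n w) := by nlinarith [abs_nonneg a, abs_nonneg b]
  rw [abs_mul]
  calc _ ≤ A * (1 + n w) * (B * (1 + n w)) :=
        mul_le_mul (hFA w) hlin (abs_nonneg _) ((abs_nonneg _).trans (hFA w))
    _ = _ := by ring

lemma hasDerivAt_integral (hn : ExpIntegrable n μ) (hF : Measurable F)
    (hFA : ∀ w, |F w| ≤ A * (1 + n w)) (hm : Measurable m) (hmn : ∀ w, |m w| ≤ n w)
    (hk : Measurable k) (hkn : ∀ w, |k w| ≤ κ * n w) {a b a' b' : ℝ → ℝ}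
    (ha : ∀ t, HasDerivAt a (a' t) t) (hb : ∀ t, HasDerivAt b (b' t) t)
    (ha' : Continuous a') (hb' : Continuous b') {t₀ : ℝ} (hpos : κ + |b t₀| < a t₀) :
    HasDerivAt (fun t => ∫ w, F w * Real.exp (-(a t * n w + b t * m w + k w)) ∂μ)
      (-∫ w, F w * (a' t₀ * n w + b' t₀ * m w) *
        Real.exp (-(a t₀ * n w + b t₀ * m w + k w)) ∂μ) t₀ := by
  have hnm := hn.measurable
  obtain ⟨ε, hε, hεt⟩ : ∃ ε > 0, ε + κ + |b t₀| < a t₀ :=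
    ⟨(a t₀ - κ - |b t₀|) / 2, by linarith, by linarith⟩
  have hca : Continuous a := continuous_iff_continuousAt.2 fun t => (ha t).continuousAt
  have hcb : Continuous b := continuous_iff_continuousAt.2 fun t => (hb t).continuousAt
  set B := |a' t₀| + |b' t₀| + 1
  have hnear : ∀ᶠ t in nhds t₀, ε + κ + |b t| < a t ∧ |a' t| + |b' t| < B :=
    (ContinuousAt.eventually_lt (by fun_prop) (by fun_prop) hεt).and
      (ContinuousAt.eventually_lt (by fun_prop) (by fun_prop) (lt_add_one _))
  have hsq (w : α) : |F w| ≤ A * (1 + n w) ^ 2 := by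
    have hn0 := hn.nonneg w
    nlinarith [hFA w, abs_nonneg (F w)]
  rw [← integral_neg]
  refine (hasDerivAt_integral_of_dominated_loc_of_deriv_le hnear
    (F' := fun t w => -(F w * (a' t * n w + b' t * m w) *
      Real.exp (-(a t * n w + b t * m w + k w))))
    (Filter.Eventually.of_forall fun t => by fun_prop)
    (hn.integrable_mul_exp_neg hε hF hsq (by fun_prop) (hn.le_exponent hmn hkn hεt.le))
    (by fun_prop) (ae_of_all _ fun w t ht => ?_)
    ((hn.integrable_sq_mul_exp_neg hε).const_mul (A * B)) (ae_of_all _ fun w t _ => ?_)).2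
  · have hslope := hn.abs_mul_slope_le hFA hmn ht.2.le w
    have hexp := hn.le_exponent hmn hkn ht.1.le w
    rw [norm_neg, norm_mul, Real.norm_of_nonneg (Real.exp_pos _).le, ← mul_assoc]
    exact mul_le_mul hslope (by gcongr) (Real.exp_pos _).le ((abs_nonneg _).trans hslope)
  · refine ((((((ha t).mul_const (n w)).add ((hb t).mul_const (m w))).add_const (k w)).neg.exp
      ).const_mul (F w)).congr_deriv ?_
    simp only [Pi.neg_apply, Pi.add_apply]; ring

end ExpIntegrable

end ExpIntegrable

lemma abs_sub_le_abs_sub_of_hasDerivAt {A B A' B' : ℝ → ℝ} (hA : ∀ t, HasDerivAt A (A' t) t)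
    (hB : ∀ t, HasDerivAt B (B' t) t) (h : ∀ t, |A' t| ≤ B' t) (s t : ℝ) :
    |A t - A s| ≤ |B t - B s| := by
  have hadd : Monotone (B + A) := monotone_of_hasDerivAt_nonneg (fun t => (hB t).add (hA t))
    fun t => by have := neg_abs_le (A' t); simp only [Pi.zero_apply]; linarith [h t]
  have hsub : Monotone (B - A) := monotone_of_hasDerivAt_nonneg (fun t => (hB t).sub (hA t))
    fun t => by have := le_abs_self (A' t); simp only [Pi.zero_apply]; linarith [h t]
  simp only [Monotone, Pi.add_apply, Pi.sub_apply] at hadd hsub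
  rcases le_total s t with hst | hst
  · exact (abs_le.2 ⟨by linarith [hadd hst], by linarith [hsub hst]⟩).trans (le_abs_self _)
  · exact (abs_le.2 ⟨by linarith [hsub hst], by linarith [hadd hst]⟩).trans (neg_le_abs _)

lemma integral_eq_zero_of_comp_eq_neg {α : Type*} [MeasurableSpace α] {μ : Measure α}
    {m : α → α} (hm : MeasurePreserving m μ μ) {F : α → ℝ} (hF : ∀ p, F (m p) = -F p) :
    ∫ p, F p ∂μ = 0 := by
  by_cases hint : Integrable F μ
  · have h := integral_map hm.aemeasurable (hm.map_eq.symm ▸ hint.aestronglyMeasurable)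
    rw [hm.map_eq] at h
    simp only [hF, integral_neg] at h
    linarith
  · exact integral_undef hint

lemma measurableEmbedding_lin {a b c d : ℝ} (h : a * d - b * c ≠ 0) :
    MeasurableEmbedding (lin a b c d) := by
  refine (LinearMap.continuous_of_finiteDimensional _).measurableEmbedding
    (LinearMap.ker_eq_bot.1 <| LinearMap.ker_eq_bot'.2 fun w hw => ?_)
  simp only [lin_apply, Prod.mk_eq_zero] at hw
  obtain ⟨h₁, h₂⟩ := hw
  refine Prod.ext (mul_left_cancel₀ h ?_) (mul_left_cancel₀ h ?_)
  · simp only [Prod.fst_zero, mul_zero]; linear_combination d * h₁ - b * h₂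
  · simp only [Prod.snd_zero, mul_zero]; linear_combination a * h₂ - c * h₁

lemma integral_comp_lin {a b c d : ℝ} (h : |a * d - b * c| = 1) (F : Plane → ℝ) :
    ∫ w, F (lin a b c d w) = ∫ w, F w :=
  (measurePreserving_lin h).integral_comp
    (measurableEmbedding_lin (abs_pos.1 (by rw [h]; exact one_pos))) F

lemma integral_comp_lin_prod {a b c d : ℝ} (h : a * d - b * c = 1) (F : Plane × Plane → ℝ) :
    ∫ p : Plane × Plane, F (lin a b c d p.1, lin a b c d p.2) = ∫ p, F p :=
  have hm := measurePreserving_lin (a := a) (b := b) (c := c) (d := d) (by rw [h, abs_one])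
  have he := measurableEmbedding_lin (a := a) (b := b) (c := c) (d := d)
    (by rw [h]; exact one_ne_zero)
  (hm.prod hm).integral_comp (he.prodMap he) F

/-- The quadratic form `π |w|²`, normalised so that its Gaussian integral is `1`. -/
noncomputable def sqNorm (w : Plane) : ℝ := Real.pi * (w.1 ^ 2 + w.2 ^ 2)

/-- The quadratic form `π Re w²`, with the plane identified with `ℂ`. -/
noncomputable def sqRe (w : Plane) : ℝ := Real.pi * (w.1 ^ 2 - w.2 ^ 2)

/-- The quadratic form `π Im w²`, with the plane identified with `ℂ`. -/
noncomputable def sqIm (w : Plane) : ℝ := Real.pi * (2 * w.1 * w.2)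

/-- The alternating form `Im (w̄² v²)`, up to the factor `π²`. -/
noncomputable def sqCross (w v : Plane) : ℝ := sqRe w * sqIm v - sqIm w * sqRe v

/-- The orthogonal direct sum of two copies of a quadratic form. -/
def pairSum (q : Plane → ℝ) (p : Plane × Plane) : ℝ := q p.1 + q p.2

lemma sqNorm_nonneg (w : Plane) : 0 ≤ sqNorm w := by unfold sqNorm; positivity

@[fun_prop] lemma measurable_sqNorm : Measurable sqNorm := by unfold sqNorm; fun_prop

@[fun_prop] lemma measurable_sqRe : Measurable sqRe := by unfold sqRe; fun_prop

@[fun_prop] lemma measurable_sqIm : Measurable sqIm := by unfold sqIm; fun_prop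

@[fun_prop] lemma measurable_pairSum {q : Plane → ℝ} (hq : Measurable q) :
    Measurable (pairSum q) := by unfold pairSum; fun_prop

lemma sqRe_sq_add_sqIm_sq (w : Plane) : sqRe w ^ 2 + sqIm w ^ 2 = sqNorm w ^ 2 := by
  unfold sqRe sqIm sqNorm; ring

lemma abs_sqRe_le (w : Plane) : |sqRe w| ≤ sqNorm w :=
  abs_le_of_sq_le_sq (by nlinarith [sqRe_sq_add_sqIm_sq w, sq_nonneg (sqIm w)]) (sqNorm_nonneg w)

lemma abs_sqIm_le (w : Plane) : |sqIm w| ≤ sqNorm w :=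
  abs_le_of_sq_le_sq (by nlinarith [sqRe_sq_add_sqIm_sq w, sq_nonneg (sqRe w)]) (sqNorm_nonneg w)

lemma abs_sqCross_le (w v : Plane) : |sqCross w v| ≤ sqNorm w * sqNorm v := by
  refine abs_le_of_sq_le_sq ?_ (mul_nonneg (sqNorm_nonneg w) (sqNorm_nonneg v))
  rw [mul_pow, ← sqRe_sq_add_sqIm_sq, ← sqRe_sq_add_sqIm_sq, sqCross]
  nlinarith [sq_nonneg (sqRe w * sqRe v + sqIm w * sqIm v)]

lemma abs_pairSum_le {q r : Plane → ℝ} (h : ∀ w, |q w| ≤ r w) (p : Plane × Plane) :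
    |pairSum q p| ≤ pairSum r p := (abs_add_le _ _).trans (add_le_add (h _) (h _))

lemma exp_neg_mul_sqNorm (ε : ℝ) (w : Plane) : Real.exp (-(ε * sqNorm w)) =
    Real.exp (-(ε * Real.pi) * w.1 ^ 2) * Real.exp (-(ε * Real.pi) * w.2 ^ 2) := by
  rw [← Real.exp_add, sqNorm]; ring_nf

lemma expIntegrable_sqNorm : ExpIntegrable sqNorm volume where
  measurable := measurable_sqNorm
  nonneg := sqNorm_nonneg
  integrable_exp_neg hε := by
    have h := integrable_exp_neg_mul_sq (mul_pos hε Real.pi_pos)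
    simp only [exp_neg_mul_sqNorm]
    exact h.mul_prod h

lemma expIntegrable_pairSum_sqNorm : ExpIntegrable (pairSum sqNorm) volume :=
  expIntegrable_sqNorm.prod expIntegrable_sqNorm

lemma integral_exp_neg_mul_sqNorm {ε : ℝ} (hε : 0 < ε) :
    ∫ w, Real.exp (-(ε * sqNorm w)) = ε⁻¹ := by
  simp_rw [exp_neg_mul_sqNorm]
  rw [Measure.volume_eq_prod, integral_prod_mul (fun x : ℝ => Real.exp (-(ε * Real.pi) * x ^ 2))
    (fun x : ℝ => Real.exp (-(ε * Real.pi) * x ^ 2)), integral_gaussian,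
    Real.mul_self_sqrt (by positivity)]
  field_simp

lemma integral_exp_neg_sqNorm : ∫ w, Real.exp (-sqNorm w) = 1 := by
  simpa using integral_exp_neg_mul_sqNorm one_pos

lemma integral_sqNorm_mul_exp_neg : ∫ w, sqNorm w * Real.exp (-sqNorm w) = 1 := by
  have hderiv := expIntegrable_sqNorm.hasDerivAt_integral (F := 1) (A := 1) (m := 0) (k := 0)
    (κ := 0) (b := 0) (t₀ := 1) measurable_one
    (fun w => by simpa using sqNorm_nonneg w) measurable_zero
    (fun w => by simpa using sqNorm_nonneg w) measurable_zero (by simp) hasDerivAt_id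
    (fun t => hasDerivAt_const t 0) continuous_const continuous_const (by simp)
  have hinv : HasDerivAt (fun t : ℝ => ∫ w, Real.exp (-(t * sqNorm w))) (-1) 1 := by
    refine HasDerivAt.congr_of_eventuallyEq
      (by simpa using hasDerivAt_inv (one_ne_zero (α := ℝ))) ?_
    filter_upwards [lt_mem_nhds (zero_lt_one (α := ℝ))] with t ht
    exact integral_exp_neg_mul_sqNorm ht
  simpa using (hderiv.congr_of_eventuallyEq (by simp)).unique hinv

/-- A bounded measurable invariant cochain whose coboundary is almost everywhere at most `M`; the
condition is imposed at the points `∞, 0, 1, s, t`, which suffices by invariance. -/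
structure Quasicocycle (f : Plane → Plane → Plane → Plane → ℝ) (S M : ℝ) : Prop
    extends ProjectiveCochain f where
  measurable : Measurable fun p : Plane × Plane × Plane × Plane => f p.1 p.2.1 p.2.2.1 p.2.2.2
  abs_le : ∀ x y z w, |f x y z w| ≤ S
  defect_le : ∀ᵐ p : ℝ × ℝ, defect f p.1 p.2 ≤ M

lemma sqNorm_quarterTurn (w : Plane) : sqNorm (lin 0 (-1) 1 0 w) = sqNorm w := by
  simp only [sqNorm, lin_apply]; ring

lemma sqRe_quarterTurn (w : Plane) : sqRe (lin 0 (-1) 1 0 w) = -sqRe w := by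
  simp only [sqRe, lin_apply]; ring

lemma sqIm_quarterTurn (w : Plane) : sqIm (lin 0 (-1) 1 0 w) = -sqIm w := by
  simp only [sqIm, lin_apply]; ring

lemma measurePreserving_quarterTurn :
    MeasurePreserving (lin 0 (-1) 1 0) (volume : Measure Plane) volume :=
  measurePreserving_lin (by norm_num)

/-- The orthogonal reflection of the plane fixing `x`. -/
noncomputable def reflection (x : Plane) : Plane →ₗ[ℝ] Plane :=
  lin ((x.1 ^ 2 - x.2 ^ 2) / (x.1 ^ 2 + x.2 ^ 2)) (2 * x.1 * x.2 / (x.1 ^ 2 + x.2 ^ 2))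
    (2 * x.1 * x.2 / (x.1 ^ 2 + x.2 ^ 2)) (-((x.1 ^ 2 - x.2 ^ 2) / (x.1 ^ 2 + x.2 ^ 2)))

section Reflection

variable {x : Plane} (hx : x ≠ 0)

include hx

lemma sq_add_sq_ne_zero : x.1 ^ 2 + x.2 ^ 2 ≠ 0 := fun h =>
  hx (Prod.ext (by nlinarith [sq_nonneg x.1, sq_nonneg x.2] : x.1 = 0)
    (by nlinarith [sq_nonneg x.1, sq_nonneg x.2] : x.2 = 0))

lemma reflection_det :
    (x.1 ^ 2 - x.2 ^ 2) / (x.1 ^ 2 + x.2 ^ 2) * -((x.1 ^ 2 - x.2 ^ 2) / (x.1 ^ 2 + x.2 ^ 2)) -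
      2 * x.1 * x.2 / (x.1 ^ 2 + x.2 ^ 2) * (2 * x.1 * x.2 / (x.1 ^ 2 + x.2 ^ 2)) = -1 := by
  have := sq_add_sq_ne_zero hx
  field_simp; ring

lemma measurePreserving_reflection : MeasurePreserving (reflection x) volume volume :=
  measurePreserving_lin (by rw [reflection_det hx]; norm_num)

lemma reflection_self : reflection x x = x := by
  have := sq_add_sq_ne_zero hx
  rw [reflection, lin_apply]
  ext <;> simp only <;> field_simp <;> ring

lemma sqNorm_reflection (w : Plane) : sqNorm (reflection x w) = sqNorm w := by
  have := sq_add_sq_ne_zero hx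
  simp only [sqNorm, reflection, lin_apply]
  field_simp; ring

lemma sqCross_reflection (w v : Plane) :
    sqCross (reflection x w) (reflection x v) = -sqCross w v := by
  have := sq_add_sq_ne_zero hx
  simp only [sqCross, sqRe, sqIm, reflection, lin_apply]
  field_simp; ring

lemma ProjectiveCochain.reflection {f : Plane → Plane → Plane → Plane → ℝ}
    (hf : ProjectiveCochain f) (y z w : Plane) :
    f x (reflection x y) (reflection x z) (reflection x w) = f x y z w := by
  have h := hf.lin (by rw [reflection_det hx]; norm_num) x y z w
  rwa [← SpenceAbel.reflection, reflection_self hx] at h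

end Reflection

namespace Quasicocycle

variable {f : Plane → Plane → Plane → Plane → ℝ} {S M : ℝ} (hf : Quasicocycle f S M)
  {x y z : Plane}

include hf

lemma measurable_comp {α : Type*} [MeasurableSpace α] {x y z w : α → Plane} (hx : Measurable x)
    (hy : Measurable y) (hz : Measurable z) (hw : Measurable w) :
    Measurable fun p => f (x p) (y p) (z p) (w p) :=
  hf.measurable.comp (hx.prodMk (hy.prodMk (hz.prodMk hw)))

lemma measurable_coboundary {α : Type*} [MeasurableSpace α] {x y z w v : α → Plane}
    (hx : Measurable x) (hy : Measurable y) (hz : Measurable z) (hw : Measurable w)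
    (hv : Measurable v) : Measurable fun p => coboundary f (x p) (y p) (z p) (w p) (v p) :=
  ((((hf.measurable_comp hy hz hw hv).sub (hf.measurable_comp hx hz hw hv)).add
    (hf.measurable_comp hx hy hw hv)).sub (hf.measurable_comp hx hy hz hv)).add
    (hf.measurable_comp hx hy hz hw)

lemma integrable_mul {α : Type*} [MeasurableSpace α] {μ : Measure α} {x y z w : α → Plane}
    (hx : Measurable x) (hy : Measurable y) (hz : Measurable z) (hw : Measurable w) {W : α → ℝ}
    (hW : Integrable W μ) : Integrable (fun p => f (x p) (y p) (z p) (w p) * W p) μ :=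
  hW.bdd_mul (hf.measurable_comp hx hy hz hw).aestronglyMeasurable
    (ae_of_all _ fun _ => hf.abs_le _ _ _ _)

lemma abs_integral_coboundary_le {α : Type*} [MeasurableSpace α] {μ : Measure α}
    {x y z w v : α → Plane} (hx : Measurable x) (hy : Measurable y) (hz : Measurable z)
    (hw : Measurable w) (hv : Measurable v) {W B : α → ℝ} (hWm : Measurable W)
    (hWB : ∀ p, |W p| ≤ B p) (hB : Integrable B μ)
    (h : ∀ᵐ p ∂μ, |coboundary f (x p) (y p) (z p) (w p) (v p)| ≤ M) :
    |∫ p, f (y p) (z p) (w p) (v p) * W p ∂μ - ∫ p, f (x p) (z p) (w p) (v p) * W p ∂μ +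
        ∫ p, f (x p) (y p) (w p) (v p) * W p ∂μ - ∫ p, f (x p) (y p) (z p) (v p) * W p ∂μ +
        ∫ p, f (x p) (y p) (z p) (w p) * W p ∂μ| ≤ M * ∫ p, B p ∂μ := by
  have hW : Integrable W μ := hB.mono' hWm.aestronglyMeasurable (ae_of_all _ hWB)
  have i₁ := hf.integrable_mul hy hz hw hv hW
  have i₂ := hf.integrable_mul hx hz hw hv hW
  have i₃ := hf.integrable_mul hx hy hw hv hW
  have i₄ := hf.integrable_mul hx hy hz hv hW
  have i₅ := hf.integrable_mul hx hy hz hw hW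
  rw [← integral_sub' i₁ i₂, ← integral_add' (i₁.sub i₂) i₃,
    ← integral_sub' ((i₁.sub i₂).add i₃) i₄, ← integral_add' (((i₁.sub i₂).add i₃).sub i₄) i₅,
    ← integral_const_mul, ← Real.norm_eq_abs]
  refine norm_integral_le_of_norm_le (hB.const_mul M) ?_
  filter_upwards [h] with p hp
  simp only [Pi.add_apply, Pi.sub_apply]
  rw [← sub_mul, ← add_mul, ← sub_mul, ← add_mul, norm_mul]
  exact mul_le_mul hp (hWB p) (norm_nonneg _) ((abs_nonneg _).trans hp)

lemma ae_abs_coboundary_le_pair (hxy : det x y ≠ 0) :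
    ∀ᵐ p : Plane × Plane × Plane, |coboundary f x y p.1 p.2.1 p.2.2| ≤ M := by
  have hyx : det y x ≠ 0 := by rw [det_swap]; exact neg_ne_zero.2 hxy
  rw [Measure.volume_eq_prod, Measure.ae_prod_iff_ae_ae]
  · filter_upwards [ae_det_ne_zero (left_ne_zero_of_det_ne_zero hxy),
      ae_det_ne_zero (left_ne_zero_of_det_ne_zero hyx)] with z hxz hyz
    exact hf.ae_abs_coboundary_le hf.defect_le hxy hxz hyz
  · have := hf.measurable_coboundary (α := Plane × Plane × Plane) (measurable_const (a := x))
      (measurable_const (a := y)) measurable_fst measurable_snd.fst measurable_snd.snd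
    exact measurableSet_le (by fun_prop) measurable_const

end Quasicocycle

lemma integrable_sqNorm_mul_exp_neg : Integrable fun w => sqNorm w * Real.exp (-sqNorm w) :=
  expIntegrable_sqNorm.integrable_mul_exp_neg (A := 1) one_pos measurable_sqNorm
    (fun w => by rw [abs_of_nonneg (sqNorm_nonneg w)]; nlinarith [sqNorm_nonneg w])
    measurable_sqNorm (by simp)

lemma integrable_exp_neg_sqNorm : Integrable fun w => Real.exp (-sqNorm w) := by
  simpa using expIntegrable_sqNorm.integrable_exp_neg one_pos

lemma exp_neg_pairSum (q : Plane → ℝ) (p : Plane × Plane) :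
    Real.exp (-pairSum q p) = Real.exp (-q p.1) * Real.exp (-q p.2) := by
  rw [pairSum, neg_add, Real.exp_add]

lemma mul_exp_neg_pairSum (q a b : Plane → ℝ) (p : Plane × Plane) :
    a p.1 * b p.2 * Real.exp (-pairSum q p) =
      a p.1 * Real.exp (-q p.1) * (b p.2 * Real.exp (-q p.2)) := by
  rw [exp_neg_pairSum, mul_mul_mul_comm]

lemma integral_mul_exp_neg_pairSum (q a b : Plane → ℝ) :
    ∫ p : Plane × Plane, a p.1 * b p.2 * Real.exp (-pairSum q p) =
      (∫ w, a w * Real.exp (-q w)) * ∫ v, b v * Real.exp (-q v) := by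
  simp only [mul_exp_neg_pairSum]
  exact integral_prod_mul (μ := volume) (ν := volume) (fun w => a w * Real.exp (-q w))
    (fun w => b w * Real.exp (-q w))

lemma integrable_mul_exp_neg_pairSum {q a b : Plane → ℝ}
    (ha : Integrable fun w => a w * Real.exp (-q w))
    (hb : Integrable fun w => b w * Real.exp (-q w)) :
    Integrable fun p : Plane × Plane => a p.1 * b p.2 * Real.exp (-pairSum q p) := by
  simp only [mul_exp_neg_pairSum]
  exact ha.mul_prod hb

/-- The Gaussian weight `sqCross`, odd under reflections and under quarter turns of one vector. -/
noncomputable def crossWeight (p : Plane × Plane) : ℝ :=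
  sqCross p.1 p.2 * Real.exp (-pairSum sqNorm p)

lemma measurable_crossWeight : Measurable crossWeight := by unfold crossWeight sqCross; fun_prop

lemma crossWeight_reflection {x : Plane} (hx : x ≠ 0) (p : Plane × Plane) :
    crossWeight (p.map (reflection x) (reflection x)) = -crossWeight p := by
  simp only [crossWeight, pairSum, Prod.map_fst, Prod.map_snd, sqCross_reflection hx,
    sqNorm_reflection hx, neg_mul]

lemma crossWeight_quarterTurn_left (p : Plane × Plane) :
    crossWeight (p.map (lin 0 (-1) 1 0) id) = -crossWeight p := by
  simp only [crossWeight, pairSum, sqCross, Prod.map_fst, Prod.map_snd, id_eq, sqNorm_quarterTurn,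
    sqRe_quarterTurn, sqIm_quarterTurn]
  ring

lemma crossWeight_quarterTurn_right (p : Plane × Plane) :
    crossWeight (p.map id (lin 0 (-1) 1 0)) = -crossWeight p := by
  simp only [crossWeight, pairSum, sqCross, Prod.map_fst, Prod.map_snd, id_eq, sqNorm_quarterTurn,
    sqRe_quarterTurn, sqIm_quarterTurn]
  ring

namespace Quasicocycle

variable {f : Plane → Plane → Plane → Plane → ℝ} {S M : ℝ} (hf : Quasicocycle f S M)
  {x y z : Plane}

include hf

/- By oddness of the weight, all faces of the coboundary integrate to zero except the one that does
not involve `z`. -/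
lemma abs_integral_crossWeight_le (hxy : det x y ≠ 0) :
    |∫ p : Plane × Plane, f x y p.1 p.2 * crossWeight p| ≤ M := by
  have hx := left_ne_zero_of_det_ne_zero hxy
  have hy : y ≠ 0 := left_ne_zero_of_det_ne_zero (y := x) (by rwa [det_swap, neg_ne_zero])
  set W : Plane × Plane × Plane → ℝ := fun p => Real.exp (-sqNorm p.1) * crossWeight p.2 with hW
  have hface₁₂ {u : Plane} (hu : u ≠ 0) :
      ∫ p : Plane × Plane × Plane, f u p.1 p.2.1 p.2.2 * W p = 0 := by
    have hm := measurePreserving_reflection hu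
    refine integral_eq_zero_of_comp_eq_neg (hm.prod (hm.prod hm)) fun p => ?_
    simp [hW, hf.reflection hu, sqNorm_reflection hu, crossWeight_reflection hu]
  have hface₃ : ∫ p : Plane × Plane × Plane, f x y p.2.1 p.2.2 * W p =
      ∫ p : Plane × Plane, f x y p.1 p.2 * crossWeight p := by
    have h := integral_prod_mul (μ := volume) (ν := volume) (fun w => Real.exp (-sqNorm w))
      fun p : Plane × Plane => f x y p.1 p.2 * crossWeight p
    simpa [hW, mul_left_comm, integral_exp_neg_sqNorm, ← Measure.volume_eq_prod] using h
  have hface₄ : ∫ p : Plane × Plane × Plane, f x y p.1 p.2.2 * W p = 0 :=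
    integral_eq_zero_of_comp_eq_neg ((MeasurePreserving.id volume).prod
      (measurePreserving_quarterTurn.prod (MeasurePreserving.id volume))) fun p => by
        simp [hW, crossWeight_quarterTurn_left]
  have hface₅ : ∫ p : Plane × Plane × Plane, f x y p.1 p.2.1 * W p = 0 :=
    integral_eq_zero_of_comp_eq_neg ((MeasurePreserving.id volume).prod
      ((MeasurePreserving.id volume).prod measurePreserving_quarterTurn)) fun p => by
        simp [hW, crossWeight_quarterTurn_right]
  have hWm : Measurable W := by have := measurable_crossWeight; fun_prop
  have h := hf.abs_integral_coboundary_le (measurable_const (a := x)) (measurable_const (a := y))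
    measurable_fst measurable_snd.fst measurable_snd.snd hWm (fun p => ?_)
    (integrable_exp_neg_sqNorm.mul_prod (integrable_mul_exp_neg_pairSum
      integrable_sqNorm_mul_exp_neg integrable_sqNorm_mul_exp_neg))
    (hf.ae_abs_coboundary_le_pair hxy)
  · rw [integral_prod_mul (fun w => Real.exp (-sqNorm w))
      (fun p : Plane × Plane => sqNorm p.1 * sqNorm p.2 * Real.exp (-pairSum sqNorm p)),
      integral_mul_exp_neg_pairSum, integral_sqNorm_mul_exp_neg, integral_exp_neg_sqNorm] at h
    simpa [hface₁₂ hx, hface₁₂ hy, hface₃, hface₄, hface₅, ← Measure.volume_eq_prod] using h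
  · simp only [hW, crossWeight, abs_mul, Real.abs_exp]
    gcongr
    exact abs_sqCross_le _ _

end Quasicocycle

/-- The hyperbolic rotation of the plane with axes `(1, ±1)`. -/
noncomputable def boost (ρ : ℝ) : Plane →ₗ[ℝ] Plane :=
  lin (Real.cosh ρ) (Real.sinh ρ) (Real.sinh ρ) (Real.cosh ρ)

/-- The hyperbolic rotation of the plane with the coordinate axes. -/
noncomputable def squeeze (t : ℝ) : Plane →ₗ[ℝ] Plane := lin (Real.exp t) 0 0 (Real.exp (-t))

lemma boost_det (ρ : ℝ) : Real.cosh ρ * Real.cosh ρ - Real.sinh ρ * Real.sinh ρ = 1 := by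
  linarith [Real.cosh_sq ρ]

lemma squeeze_det (t : ℝ) : Real.exp t * Real.exp (-t) - 0 * 0 = 1 := by
  rw [← Real.exp_add]; simp

lemma sqNorm_boost (ρ : ℝ) (w : Plane) :
    sqNorm (boost ρ w) = Real.cosh (2 * ρ) * sqNorm w + Real.sinh (2 * ρ) * sqIm w := by
  simp only [sqNorm, sqIm, boost, lin_apply, Real.cosh_two_mul, Real.sinh_two_mul]; ring

lemma sqRe_boost (ρ : ℝ) (w : Plane) : sqRe (boost ρ w) = sqRe w := by
  simp only [sqRe, boost, lin_apply]
  linear_combination Real.pi * (w.1 ^ 2 - w.2 ^ 2) * boost_det ρ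

lemma sqIm_boost (ρ : ℝ) (w : Plane) :
    sqIm (boost ρ w) = Real.sinh (2 * ρ) * sqNorm w + Real.cosh (2 * ρ) * sqIm w := by
  simp only [sqNorm, sqIm, boost, lin_apply, Real.cosh_two_mul, Real.sinh_two_mul]; ring

lemma sqNorm_squeeze (t : ℝ) (w : Plane) :
    sqNorm (squeeze t w) = Real.cosh (2 * t) * sqNorm w + Real.sinh (2 * t) * sqRe w := by
  simp only [sqNorm, sqRe, squeeze, lin_apply, Real.cosh_eq, Real.sinh_eq, mul_pow, zero_mul,
    add_zero, zero_add, ← Real.exp_nat_mul, Nat.cast_ofNat, mul_neg]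
  ring

lemma sqRe_squeeze (t : ℝ) (w : Plane) :
    sqRe (squeeze t w) = Real.sinh (2 * t) * sqNorm w + Real.cosh (2 * t) * sqRe w := by
  simp only [sqNorm, sqRe, squeeze, lin_apply, Real.cosh_eq, Real.sinh_eq, mul_pow, zero_mul,
    add_zero, zero_add, ← Real.exp_nat_mul, Nat.cast_ofNat, mul_neg]
  ring

lemma sqIm_squeeze (t : ℝ) (w : Plane) : sqIm (squeeze t w) = sqIm w := by
  simp only [sqIm, squeeze, lin_apply]
  linear_combination 2 * Real.pi * w.1 * w.2 * squeeze_det t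

lemma ProjectiveCochain.boost {f : Plane → Plane → Plane → Plane → ℝ} (hf : ProjectiveCochain f)
    (ρ : ℝ) (x y z w : Plane) : f (boost ρ x) (boost ρ y) (boost ρ z) (boost ρ w) = f x y z w :=
  hf.lin (by rw [boost_det]; exact one_ne_zero) x y z w

lemma ProjectiveCochain.squeeze {f : Plane → Plane → Plane → Plane → ℝ} (hf : ProjectiveCochain f)
    (t : ℝ) (x y z w : Plane) :
    f (squeeze t x) (squeeze t y) (squeeze t z) (squeeze t w) = f x y z w :=
  hf.lin (by rw [squeeze_det]; exact one_ne_zero) x y z w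

lemma ProjectiveCochain.squeeze_axes {f : Plane → Plane → Plane → Plane → ℝ}
    (hf : ProjectiveCochain f) (t : ℝ) (w v : Plane) :
    f (1, 0) (0, 1) (SpenceAbel.squeeze t w) (SpenceAbel.squeeze t v) = f (1, 0) (0, 1) w v := by
  rw [← hf.squeeze t (1, 0) (0, 1) w v, ← hf.smul₁ (Real.exp_ne_zero t),
    ← hf.smul₂ (Real.exp_ne_zero (-t))]
  simp [SpenceAbel.squeeze, lin_apply]

lemma abs_sinh_lt_cosh (t : ℝ) : |Real.sinh t| < Real.cosh t := by
  rw [Real.abs_sinh, ← Real.cosh_abs]; exact Real.sinh_lt_cosh _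

lemma hasDerivAt_cosh_two_mul (t : ℝ) :
    HasDerivAt (fun t => Real.cosh (2 * t)) (2 * Real.sinh (2 * t)) t := by
  simpa [mul_comm] using ((hasDerivAt_id t).const_mul 2).cosh

lemma hasDerivAt_sinh_two_mul (t : ℝ) :
    HasDerivAt (fun t => Real.sinh (2 * t)) (2 * Real.cosh (2 * t)) t := by
  simpa [mul_comm] using ((hasDerivAt_id t).const_mul 2).sinh

/-- The moment of `f x y` against a polynomial `P` for the Gaussian measure on pairs of vectors. -/
noncomputable def pairMoment (f : Plane → Plane → Plane → Plane → ℝ) (P : Plane × Plane → ℝ)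
    (x y : Plane) : ℝ :=
  ∫ p : Plane × Plane, f x y p.1 p.2 * (P p * Real.exp (-pairSum sqNorm p))

/-- The moment of `f (1, 0) (0, 1)` for the Gaussian measure pulled back along `boost ρ`. -/
noncomputable def boostMoment (f : Plane → Plane → Plane → Plane → ℝ) (P : Plane × Plane → ℝ)
    (ρ : ℝ) : ℝ :=
  ∫ p : Plane × Plane, f (1, 0) (0, 1) p.1 p.2 * P p *
    Real.exp (-(Real.cosh (2 * ρ) * pairSum sqNorm p + Real.sinh (2 * ρ) * pairSum sqIm p))

namespace Quasicocycle

variable {f : Plane → Plane → Plane → Plane → ℝ} {S M : ℝ} (hf : Quasicocycle f S M)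

include hf

lemma pairMoment_boost (P : Plane × Plane → ℝ) (ρ : ℝ) :
    pairMoment f P (boost ρ (1, 0)) (boost ρ (0, 1)) =
      boostMoment f (fun p => P (boost ρ p.1, boost ρ p.2)) ρ := by
  rw [pairMoment, ← integral_comp_lin_prod (boost_det ρ), ← boost, boostMoment]
  simp only [hf.boost, pairSum, sqNorm_boost]
  congr! 2 with p
  ring_nf

lemma measurable_axes : Measurable fun p : Plane × Plane => f (1, 0) (0, 1) p.1 p.2 :=
  hf.measurable_comp measurable_const measurable_const measurable_fst measurable_snd

lemma abs_axes_mul_le {P : Plane × Plane → ℝ} {B : ℝ} {p : Plane × Plane} (hP : |P p| ≤ B) :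
    |f (1, 0) (0, 1) p.1 p.2 * P p| ≤ S * B := by
  rw [abs_mul]
  exact mul_le_mul (hf.abs_le _ _ _ _) hP (abs_nonneg _) ((abs_nonneg _).trans (hf.abs_le 0 0 0 0))

lemma integrable_boostMoment {P : Plane × Plane → ℝ} (hP : Measurable P) {A : ℝ}
    (hPA : ∀ p, |P p| ≤ A * (1 + pairSum sqNorm p) ^ 2) (ρ : ℝ) :
    Integrable fun p : Plane × Plane => f (1, 0) (0, 1) p.1 p.2 * P p *
      Real.exp (-(Real.cosh (2 * ρ) * pairSum sqNorm p + Real.sinh (2 * ρ) * pairSum sqIm p)) := by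
  have haxes := hf.measurable_axes
  refine expIntegrable_pairSum_sqNorm.integrable_mul_exp_neg (A := S * A)
    (sub_pos.2 (abs_sinh_lt_cosh (2 * ρ))) (by fun_prop)
    (fun p => (hf.abs_axes_mul_le (hPA p)).trans_eq (by ring)) (by fun_prop) fun p => ?_
  simpa using expIntegrable_pairSum_sqNorm.le_exponent (m := pairSum sqIm) (k := 0) (κ := 0)
    (abs_pairSum_le abs_sqIm_le) (by simp) (by simp) p

lemma boostMoment_linear {P Q : Plane × Plane → ℝ} (hP : Measurable P) (hQ : Measurable Q)
    {A B : ℝ} (hPA : ∀ p, |P p| ≤ A * (1 + pairSum sqNorm p) ^ 2)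
    (hQB : ∀ p, |Q p| ≤ B * (1 + pairSum sqNorm p) ^ 2) (a b ρ : ℝ) :
    boostMoment f (fun p => a * P p + b * Q p) ρ =
      a * boostMoment f P ρ + b * boostMoment f Q ρ := by
  rw [boostMoment, boostMoment, boostMoment, ← integral_const_mul, ← integral_const_mul,
    ← integral_add ((hf.integrable_boostMoment hP hPA ρ).const_mul a)
      ((hf.integrable_boostMoment hQ hQB ρ).const_mul b)]
  congr! 2 with p
  ring

lemma hasDerivAt_boostMoment_sqRe (ρ : ℝ) :
    HasDerivAt (boostMoment f fun p => sqRe p.1)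
      (-2 * boostMoment f (fun p => sqRe p.1 * pairSum (fun w => sqIm (boost ρ w)) p) ρ) ρ := by
  have haxes := hf.measurable_axes
  have h := expIntegrable_pairSum_sqNorm.hasDerivAt_integral (A := S) (m := pairSum sqIm) (k := 0)
    (κ := 0) (F := fun p => f (1, 0) (0, 1) p.1 p.2 * sqRe p.1) (by fun_prop)
    (fun p => hf.abs_axes_mul_le (P := fun p => sqRe p.1) ?_) (by fun_prop)
    (abs_pairSum_le abs_sqIm_le) measurable_zero (by simp) hasDerivAt_cosh_two_mul
    hasDerivAt_sinh_two_mul (by fun_prop) (by fun_prop) (t₀ := ρ)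
    (by simpa using abs_sinh_lt_cosh _)
  · simp only [Pi.zero_apply, add_zero] at h
    refine h.congr_deriv ?_
    rw [boostMoment, ← integral_const_mul, ← integral_neg]
    simp only [pairSum, sqIm_boost]
    congr! 2 with _
    ring
  · have := sqNorm_nonneg p.2
    simp only [pairSum]
    linarith [abs_sqRe_le p.1]

end Quasicocycle

lemma abs_mul_pairSum_le {W q : Plane → ℝ} {a b : ℝ} (ha : 0 ≤ a) (hb : 0 ≤ b)
    (hW : ∀ w, |W w| ≤ a * sqNorm w) (hq : ∀ w, |q w| ≤ b * sqNorm w) (p : Plane × Plane) :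
    |W p.1 * pairSum q p| ≤ a * b * (1 + pairSum sqNorm p) ^ 2 := by
  have h₁ := sqNorm_nonneg p.1
  have h₂ := sqNorm_nonneg p.2
  have hqp : |pairSum q p| ≤ b * pairSum sqNorm p :=
    (abs_pairSum_le hq p).trans_eq (by simp only [pairSum]; ring)
  have hle : pairSum sqNorm p ≤ 1 + pairSum sqNorm p := by linarith
  have hle₁ : sqNorm p.1 ≤ 1 + pairSum sqNorm p := by simp only [pairSum]; linarith
  calc |W p.1 * pairSum q p| ≤ a * sqNorm p.1 * (b * pairSum sqNorm p) := by
        rw [abs_mul]; exact mul_le_mul (hW _) hqp (abs_nonneg _) (by positivity)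
    _ ≤ a * (1 + pairSum sqNorm p) * (b * (1 + pairSum sqNorm p)) := by
        have : 0 ≤ pairSum sqNorm p := add_nonneg h₁ h₂
        gcongr
    _ = _ := by ring

lemma abs_sqIm_boost_le (ρ : ℝ) (w : Plane) :
    |sqIm (boost ρ w)| ≤ (Real.cosh (2 * ρ) + |Real.sinh (2 * ρ)|) * sqNorm w := by
  refine (abs_sqIm_le _).trans ?_
  have h : |Real.sinh (2 * ρ) * sqIm w| ≤ |Real.sinh (2 * ρ)| * sqNorm w := by
    rw [abs_mul]; gcongr; exact abs_sqIm_le w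
  rw [sqNorm_boost, add_mul]
  linarith [le_abs_self (Real.sinh (2 * ρ) * sqIm w)]

/-- The moment of `f (1, 0) (0, 1)` against a polynomial in the first vector, for the Gaussian
measure pulled back along `boost ρ` and then along `squeeze t`. -/
noncomputable def squeezeMoment (f : Plane → Plane → Plane → Plane → ℝ) (W : Plane → ℝ)
    (ρ t : ℝ) : ℝ :=
  ∫ p : Plane × Plane, f (1, 0) (0, 1) p.1 p.2 * W p.1 *
    Real.exp (-(Real.cosh (2 * ρ) * Real.cosh (2 * t) * pairSum sqNorm p +
      Real.cosh (2 * ρ) * Real.sinh (2 * t) * pairSum sqRe p +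
      Real.sinh (2 * ρ) * pairSum sqIm p))

namespace Quasicocycle

variable {f : Plane → Plane → Plane → Plane → ℝ} {S M : ℝ} (hf : Quasicocycle f S M)
  {W : Plane → ℝ}

include hf

lemma abs_axes_mul_fst_le (hWN : ∀ w, |W w| ≤ sqNorm w) (p : Plane × Plane) :
    |f (1, 0) (0, 1) p.1 p.2 * W p.1| ≤ S * (1 + pairSum sqNorm p) := by
  have := sqNorm_nonneg p.2
  exact hf.abs_axes_mul_le (P := fun p => W p.1)
    ((hWN p.1).trans (by simp only [pairSum]; linarith))

lemma eventually_integrable_squeezeMoment (ρ : ℝ) : ∀ᶠ t in nhds (0 : ℝ), ∀ W : Plane → ℝ,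
    Measurable W → (∀ w, |W w| ≤ sqNorm w) →
    Integrable fun p : Plane × Plane => f (1, 0) (0, 1) p.1 p.2 * W p.1 *
      Real.exp (-(Real.cosh (2 * ρ) * Real.cosh (2 * t) * pairSum sqNorm p +
        Real.cosh (2 * ρ) * Real.sinh (2 * t) * pairSum sqRe p +
        Real.sinh (2 * ρ) * pairSum sqIm p)) := by
  have hnear : ∀ᶠ t in nhds (0 : ℝ), |Real.sinh (2 * ρ)| + |Real.cosh (2 * ρ) * Real.sinh (2 * t)| <
      Real.cosh (2 * ρ) * Real.cosh (2 * t) :=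
    ContinuousAt.eventually_lt (by fun_prop) (by fun_prop) (by simpa using abs_sinh_lt_cosh _)
  filter_upwards [hnear] with t ht W hW hWN
  have haxes := hf.measurable_axes
  refine expIntegrable_pairSum_sqNorm.integrable_mul_exp_neg (A := S) (sub_pos.2 ht) (by fun_prop)
    (fun p => (hf.abs_axes_mul_fst_le hWN p).trans ?_) (by fun_prop)
    (expIntegrable_pairSum_sqNorm.le_exponent (κ := |Real.sinh (2 * ρ)|)
      (abs_pairSum_le abs_sqRe_le) (fun p => ?_) (by linarith))
  · have hS := (abs_nonneg _).trans (hf.abs_le 0 0 0 0)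
    have hN := expIntegrable_pairSum_sqNorm.nonneg p
    exact mul_le_mul_of_nonneg_left (by nlinarith) hS
  · rw [abs_mul]
    exact mul_le_mul_of_nonneg_left (abs_pairSum_le abs_sqIm_le p) (abs_nonneg _)

lemma hasDerivAt_squeezeMoment (hW : Measurable W) (hWN : ∀ w, |W w| ≤ sqNorm w) (ρ : ℝ) :
    HasDerivAt (squeezeMoment f W ρ)
      (-(2 * Real.cosh (2 * ρ)) * boostMoment f (fun p => W p.1 * pairSum sqRe p) ρ) 0 := by
  have haxes := hf.measurable_axes
  have h := expIntegrable_pairSum_sqNorm.hasDerivAt_integral (A := S) (m := pairSum sqRe)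
    (k := fun p => Real.sinh (2 * ρ) * pairSum sqIm p) (κ := |Real.sinh (2 * ρ)|)
    (F := fun p => f (1, 0) (0, 1) p.1 p.2 * W p.1) (by fun_prop) (hf.abs_axes_mul_fst_le hWN)
    (by fun_prop) (abs_pairSum_le abs_sqRe_le) (by fun_prop) (fun p => ?_)
    (fun t => (hasDerivAt_cosh_two_mul t).const_mul (Real.cosh (2 * ρ)))
    (fun t => (hasDerivAt_sinh_two_mul t).const_mul (Real.cosh (2 * ρ))) (by fun_prop)
    (by fun_prop) (t₀ := 0) (by simpa using abs_sinh_lt_cosh _)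
  · refine h.congr_deriv ?_
    rw [boostMoment, ← integral_const_mul, ← integral_neg]
    congr! 2 with _
    simp only [mul_zero, Real.sinh_zero, Real.cosh_zero, mul_one, zero_mul, zero_add, add_zero]
    ring
  · rw [abs_mul]
    exact mul_le_mul_of_nonneg_left (abs_pairSum_le abs_sqIm_le p) (abs_nonneg _)

lemma eventually_squeezeMoment (ρ : ℝ) : ∀ᶠ t in nhds (0 : ℝ),
    Real.sinh (2 * ρ) * (Real.cosh (2 * t) * squeezeMoment f sqNorm ρ t +
      Real.sinh (2 * t) * squeezeMoment f sqRe ρ t) +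
      Real.cosh (2 * ρ) * squeezeMoment f sqIm ρ t =
    boostMoment f (fun p => sqIm (boost ρ p.1)) ρ := by
  filter_upwards [hf.eventually_integrable_squeezeMoment ρ] with t ht
  have hN := ht sqNorm measurable_sqNorm fun w => (abs_of_nonneg (sqNorm_nonneg w)).le
  have hX := ht sqRe measurable_sqRe abs_sqRe_le
  have hY := ht sqIm measurable_sqIm abs_sqIm_le
  have hNX := (hN.const_mul (Real.cosh (2 * t))).add (hX.const_mul (Real.sinh (2 * t)))
  rw [boostMoment, ← integral_comp_lin_prod (squeeze_det t), ← squeeze]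
  simp only [squeezeMoment]
  rw [← integral_const_mul, ← integral_const_mul, ← integral_add' (hN.const_mul _) (hX.const_mul _),
    ← integral_const_mul, ← integral_const_mul, ← integral_add' (hNX.const_mul _) (hY.const_mul _)]
  congr! 2 with _
  simp only [hf.squeeze_axes, pairSum, sqIm_boost, sqNorm_squeeze, sqIm_squeeze, Pi.add_apply]
  ring_nf

/- The infinitesimal form of the invariance of the Gaussian moment of `sqIm ∘ boost ρ` under
`squeeze`. -/
lemma sinh_mul_boostMoment_sqRe (ρ : ℝ) :
    Real.sinh (2 * ρ) * boostMoment f (fun p => sqRe p.1) ρ =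
      Real.cosh (2 * ρ) * boostMoment f (fun p => sqIm (boost ρ p.1) * pairSum sqRe p) ρ := by
  have hsqNorm (w : Plane) : |sqNorm w| ≤ sqNorm w := (abs_of_nonneg (sqNorm_nonneg w)).le
  have hN := hf.hasDerivAt_squeezeMoment measurable_sqNorm hsqNorm ρ
  have hX := hf.hasDerivAt_squeezeMoment measurable_sqRe abs_sqRe_le ρ
  have hY := hf.hasDerivAt_squeezeMoment measurable_sqIm abs_sqIm_le ρ
  have hX0 : squeezeMoment f sqRe ρ 0 = boostMoment f (fun p => sqRe p.1) ρ := by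
    simp [squeezeMoment, boostMoment]
  have hderiv := (((((hasDerivAt_cosh_two_mul 0).mul hN).add
    ((hasDerivAt_sinh_two_mul 0).mul hX)).const_mul (Real.sinh (2 * ρ))).add
    (hY.const_mul (Real.cosh (2 * ρ)))).unique
    ((hasDerivAt_const 0 _).congr_of_eventuallyEq (hf.eventually_squeezeMoment ρ))
  have hsplit := hf.boostMoment_linear (P := fun p => sqNorm p.1 * pairSum sqRe p)
    (Q := fun p => sqIm p.1 * pairSum sqRe p) (by fun_prop) (by fun_prop)
    (abs_mul_pairSum_le zero_le_one zero_le_one (by simpa using hsqNorm)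
      (by simpa using abs_sqRe_le))
    (abs_mul_pairSum_le zero_le_one zero_le_one (by simpa using abs_sqIm_le)
      (by simpa using abs_sqRe_le)) (Real.sinh (2 * ρ)) (Real.cosh (2 * ρ)) ρ
  simp only [mul_zero, Real.sinh_zero, Real.cosh_zero, hX0] at hderiv
  simp only [sqIm_boost, add_mul, mul_assoc, hsplit]
  linarith

lemma boostMoment_sqCross (ρ : ℝ) :
    boostMoment f (fun p => sqCross (boost ρ p.1) (boost ρ p.2)) ρ =
      boostMoment f (fun p => sqRe p.1 * pairSum (fun w => sqIm (boost ρ w)) p) ρ -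
        boostMoment f (fun p => sqIm (boost ρ p.1) * pairSum sqRe p) ρ := by
  have hcosh : 0 ≤ Real.cosh (2 * ρ) + |Real.sinh (2 * ρ)| := by positivity
  have hmeas : Measurable fun w => sqIm (boost ρ w) := by
    simp only [sqIm_boost]; fun_prop
  have hRe (w : Plane) : |sqRe w| ≤ 1 * sqNorm w := by simpa using abs_sqRe_le w
  have hsplit := hf.boostMoment_linear
    (P := fun p => sqRe p.1 * pairSum (fun w => sqIm (boost ρ w)) p)
    (Q := fun p => sqIm (boost ρ p.1) * pairSum sqRe p) (by fun_prop) (by fun_prop)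
    (abs_mul_pairSum_le zero_le_one hcosh hRe (abs_sqIm_boost_le ρ))
    (abs_mul_pairSum_le hcosh zero_le_one (abs_sqIm_boost_le ρ) hRe) 1 (-1) ρ
  rw [one_mul, neg_one_mul, ← sub_eq_add_neg] at hsplit
  rw [← hsplit]
  congr! 2 with p
  simp only [sqCross, pairSum, sqRe_boost]
  ring

lemma abs_cosh_mul_pairMoment_sub_le (ρ : ℝ) :
    |Real.cosh (2 * ρ) * pairMoment f (fun p => sqRe p.1) (boost ρ (1, 0)) (boost ρ (0, 1)) -
      pairMoment f (fun p => sqRe p.1) (1, 0) (0, 1)| ≤ M * |Real.sinh (2 * ρ)| := by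
  have hcross (ρ : ℝ) :
      |boostMoment f (fun p => sqCross (boost ρ p.1) (boost ρ p.2)) ρ| ≤ M := by
    rw [← hf.pairMoment_boost (fun p => sqCross p.1 p.2)]
    exact hf.abs_integral_crossWeight_le (by rw [boost, det_lin, boost_det]; norm_num [det])
  have hA (ρ : ℝ) := (hasDerivAt_cosh_two_mul ρ).mul (hf.hasDerivAt_boostMoment_sqRe ρ)
  have hB (ρ : ℝ) := (hasDerivAt_sinh_two_mul ρ).const_mul M
  have hbound := abs_sub_le_abs_sub_of_hasDerivAt hA hB (fun ρ => ?_) 0 ρ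
  · have hM := (abs_nonneg _).trans (hcross 0)
    have h0 : boostMoment f (fun p => sqRe p.1) 0 =
        pairMoment f (fun p => sqRe p.1) (1, 0) (0, 1) := by
      simp [boostMoment, pairMoment, mul_assoc]
    simpa [hf.pairMoment_boost (fun p => sqRe p.1), sqRe_boost, abs_mul, abs_of_nonneg hM, h0]
      using hbound
  · have hderiv : 2 * Real.sinh (2 * ρ) * boostMoment f (fun p => sqRe p.1) ρ +
        Real.cosh (2 * ρ) * (-2 *
          boostMoment f (fun p => sqRe p.1 * pairSum (fun w => sqIm (boost ρ w)) p) ρ) =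
        -(2 * Real.cosh (2 * ρ)) *
          boostMoment f (fun p => sqCross (boost ρ p.1) (boost ρ p.2)) ρ := by
      linear_combination 2 * hf.sinh_mul_boostMoment_sqRe ρ +
        2 * Real.cosh (2 * ρ) * hf.boostMoment_sqCross ρ
    rw [hderiv, abs_mul, abs_neg, abs_of_pos (by positivity), mul_comm M]
    exact mul_le_mul_of_nonneg_left (hcross ρ) (by positivity)

end Quasicocycle

/-- The rotation of the plane by the angle `θ`. -/
noncomputable def rotation (θ : ℝ) : Plane →ₗ[ℝ] Plane :=
  lin (Real.cos θ) (-Real.sin θ) (Real.sin θ) (Real.cos θ)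

lemma rotation_det (θ : ℝ) : Real.cos θ * Real.cos θ - -Real.sin θ * Real.sin θ = 1 := by
  linarith [Real.cos_sq_add_sin_sq θ]

lemma sqNorm_rotation (θ : ℝ) (w : Plane) : sqNorm (rotation θ w) = sqNorm w := by
  simp only [sqNorm, rotation, lin_apply]
  linear_combination Real.pi * (w.1 ^ 2 + w.2 ^ 2) * rotation_det θ

lemma sqRe_rotation (θ : ℝ) (w : Plane) :
    sqRe (rotation θ w) = Real.cos (2 * θ) * sqRe w - Real.sin (2 * θ) * sqIm w := by
  simp only [sqRe, sqIm, rotation, lin_apply, Real.cos_two_mul', Real.sin_two_mul]; ring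

lemma exists_polar (x : Plane) : ∃ r θ : ℝ, x = r • ((Real.cos θ, Real.sin θ) : Plane) := by
  refine ⟨‖(⟨x.1, x.2⟩ : ℂ)‖, (⟨x.1, x.2⟩ : ℂ).arg, by simp⟩

lemma exists_eq_mul_cosh_sinh {a b : ℝ} (h : b ^ 2 < a ^ 2) :
    ∃ r ρ : ℝ, a = r * Real.cosh ρ ∧ b = r * Real.sinh ρ := by
  have ha : a ≠ 0 := by rintro rfl; nlinarith [sq_nonneg b]
  have hba : b / a ∈ Ioo (-1) 1 := by
    rw [mem_Ioo, ← abs_lt, abs_div, div_lt_one (abs_pos.2 ha)]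
    exact sq_lt_sq.1 h
  have hcosh := (Real.cosh_pos (Real.artanh (b / a))).ne'
  refine ⟨a / Real.cosh (Real.artanh (b / a)), Real.artanh (b / a), by field_simp, ?_⟩
  rw [div_mul_eq_mul_div, mul_div_assoc, ← Real.tanh_eq_sinh_div_cosh, Real.tanh_artanh hba]
  field_simp

lemma rotation_cos_sin (θ a : ℝ) :
    rotation θ (Real.cos a, Real.sin a) = (Real.cos (θ + a), Real.sin (θ + a)) := by
  rw [rotation, lin_apply, Real.cos_add, Real.sin_add, neg_mul, ← sub_eq_add_neg, add_comm]

lemma exists_polar_of_det_ne_zero {x y : Plane} (hxy : det x y ≠ 0) : ∃ r s a b : ℝ,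
    0 < Real.sin (b - a) ∧ x = r • ((Real.cos a, Real.sin a) : Plane) ∧
      y = s • ((Real.cos b, Real.sin b) : Plane) := by
  obtain ⟨r, a, rfl⟩ := exists_polar x
  obtain ⟨s, b, rfl⟩ := exists_polar y
  have hdet : det (r • (Real.cos a, Real.sin a)) (s • (Real.cos b, Real.sin b)) =
      r * s * Real.sin (b - a) := by
    simp only [det, Real.sin_sub, Prod.smul_mk, smul_eq_mul]; ring
  rcases (right_ne_zero_of_mul (hdet ▸ hxy)).lt_or_gt with hneg | hpos
  · refine ⟨r, -s, a, b + Real.pi, ?_, rfl, by simp⟩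
    rwa [add_sub_right_comm, Real.sin_add_pi, neg_pos]
  · exact ⟨r, s, a, b, hpos, rfl, rfl⟩

/- The bisectors of the two lines are rotated onto the axes of the hyperbolic rotation. -/
lemma exists_eq_smul_rotation_boost {x y : Plane} (hxy : det x y ≠ 0) : ∃ α β θ ρ : ℝ,
    α ≠ 0 ∧ β ≠ 0 ∧ x = α • rotation θ (boost ρ (1, 0)) ∧ y = β • rotation θ (boost ρ (0, 1)) := by
  have hyx : det y x ≠ 0 := by rwa [det_swap, neg_ne_zero]
  obtain ⟨r, s, a, b, hab, hx, hy⟩ := exists_polar_of_det_ne_zero hxy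
  set ψ := (a - b) / 2 + Real.pi / 4 with hψ
  have hψ2 : Real.cos (2 * ψ) = Real.sin (b - a) := by
    rw [← Real.cos_pi_div_two_sub, hψ]; ring_nf
  obtain ⟨l, ρ, hcos, hsin⟩ := exists_eq_mul_cosh_sinh (a := Real.cos ψ) (b := Real.sin ψ)
    (by rw [← hψ2, Real.cos_two_mul'] at hab; linarith)
  have hxρ : l • boost ρ (1, 0) = (Real.cos ψ, Real.sin ψ) := by
    simp [boost, lin_apply, hcos, hsin]
  have hyρ : l • boost ρ (0, 1) = (Real.cos (Real.pi / 2 - ψ), Real.sin (Real.pi / 2 - ψ)) := by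
    simp [boost, lin_apply, hcos, hsin, Real.cos_pi_div_two_sub, Real.sin_pi_div_two_sub]
  have hx' : x = (r * l) • rotation (a - ψ) (boost ρ (1, 0)) := by
    rw [mul_smul, ← map_smul, hxρ, rotation_cos_sin, hx, sub_add_cancel]
  have hy' : y = (s * l) • rotation (a - ψ) (boost ρ (0, 1)) := by
    rw [mul_smul, ← map_smul, hyρ, rotation_cos_sin, hy,
      show a - ψ + (Real.pi / 2 - ψ) = b by rw [hψ]; ring]
  refine ⟨r * l, s * l, a - ψ, ρ, fun h => ?_, fun h => ?_, hx', hy'⟩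
  · exact left_ne_zero_of_det_ne_zero hxy (by rw [hx', h, zero_smul])
  · exact left_ne_zero_of_det_ne_zero hyx (by rw [hy', h, zero_smul])

/-- The function `cos (2 arg w)` on nonzero vectors. -/
noncomputable def cosTwoArg (w : Plane) : ℝ := sqRe w / sqNorm w

lemma cosTwoArg_smul {c : ℝ} (hc : c ≠ 0) (w : Plane) : cosTwoArg (c • w) = cosTwoArg w := by
  have hre : sqRe (c • w) = c ^ 2 * sqRe w := by
    simp only [sqRe, Prod.smul_fst, Prod.smul_snd, smul_eq_mul]; ring
  have hnorm : sqNorm (c • w) = c ^ 2 * sqNorm w := by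
    simp only [sqNorm, Prod.smul_fst, Prod.smul_snd, smul_eq_mul]; ring
  rw [cosTwoArg, hre, hnorm, mul_div_mul_left _ _ (pow_ne_zero 2 hc), cosTwoArg]

lemma cosTwoArg_rotation_boost_sub (θ ρ : ℝ) :
    cosTwoArg (rotation θ (boost ρ (1, 0))) - cosTwoArg (rotation θ (boost ρ (0, 1))) =
      2 * (Real.cos (2 * θ) / Real.cosh (2 * ρ)) := by
  have := (Real.cosh_pos (2 * ρ)).ne'
  simp only [cosTwoArg, sqRe_rotation, sqNorm_rotation, sqNorm_boost, sqRe_boost, sqIm_boost]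
  norm_num [sqRe, sqNorm, sqIm]
  field_simp
  ring

namespace Quasicocycle

variable {f : Plane → Plane → Plane → Plane → ℝ} {S M : ℝ} (hf : Quasicocycle f S M)
  {x y z : Plane}

include hf

lemma pairMoment_smul {α β : ℝ} (hα : α ≠ 0) (hβ : β ≠ 0) (P : Plane × Plane → ℝ) (x y : Plane) :
    pairMoment f P (α • x) (β • y) = pairMoment f P x y := by
  simp only [pairMoment, hf.smul₁ hα, hf.smul₂ hβ]

lemma integrable_pairMoment {W : Plane → ℝ} (hW : Measurable W) (hWN : ∀ w, |W w| ≤ sqNorm w)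
    (x y : Plane) :
    Integrable fun p : Plane × Plane => f x y p.1 p.2 * (W p.1 * Real.exp (-pairSum sqNorm p)) := by
  have hWexp : Integrable fun w => W w * Real.exp (-sqNorm w) :=
    integrable_sqNorm_mul_exp_neg.mono' (by fun_prop) (ae_of_all _ fun w => by
      rw [norm_mul, Real.norm_eq_abs, Real.norm_eq_abs, Real.abs_exp]
      exact mul_le_mul_of_nonneg_right (hWN w) (Real.exp_pos _).le)
  have h := integrable_mul_exp_neg_pairSum (b := 1) hWexp (by simpa using integrable_exp_neg_sqNorm)
  simp only [Pi.one_apply, mul_one] at h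
  exact hf.integrable_mul measurable_const measurable_const measurable_fst measurable_snd h

lemma pairMoment_sqRe_rotation (θ : ℝ) (x y : Plane) :
    pairMoment f (fun p => sqRe p.1) (rotation θ x) (rotation θ y) =
      Real.cos (2 * θ) * pairMoment f (fun p => sqRe p.1) x y -
        Real.sin (2 * θ) * pairMoment f (fun p => sqIm p.1) x y := by
  have hrot (w v : Plane) : f (rotation θ x) (rotation θ y) (rotation θ w) (rotation θ v) =
      f x y w v := hf.lin (by rw [rotation_det]; exact one_ne_zero) x y w v
  rw [pairMoment, ← integral_comp_lin_prod (rotation_det θ), ← rotation, pairMoment, pairMoment,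
    ← integral_const_mul, ← integral_const_mul, ← integral_sub
      ((hf.integrable_pairMoment measurable_sqRe abs_sqRe_le x y).const_mul _)
      ((hf.integrable_pairMoment measurable_sqIm abs_sqIm_le x y).const_mul _)]
  congr! 2 with p
  simp only [hrot, pairSum, sqRe_rotation, sqNorm_rotation]
  ring

/- The reflection in the diagonal exchanges the two lines and preserves `sqIm`. -/
lemma pairMoment_sqIm_boost (ρ : ℝ) :
    pairMoment f (fun p => sqIm p.1) (boost ρ (1, 0)) (boost ρ (0, 1)) = 0 := by
  have hm : MeasurePreserving (lin 0 1 1 0) (volume : Measure Plane) volume :=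
    measurePreserving_lin (by norm_num)
  refine integral_eq_zero_of_comp_eq_neg (hm.prod hm) fun p => ?_
  have hswap : f (boost ρ (1, 0)) (boost ρ (0, 1)) (lin 0 1 1 0 p.1) (lin 0 1 1 0 p.2) =
      -f (boost ρ (1, 0)) (boost ρ (0, 1)) p.1 p.2 := by
    rw [hf.swap₁₂, ← hf.lin (a := 0) (b := 1) (c := 1) (d := 0) (by norm_num)
      (boost ρ (1, 0)) (boost ρ (0, 1)) p.1 p.2]
    simp [boost, lin_apply]
  have hIm (w : Plane) : sqIm (lin 0 1 1 0 w) = sqIm w := by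
    simp only [sqIm, lin_apply]; ring
  have hnorm (w : Plane) : sqNorm (lin 0 1 1 0 w) = sqNorm w := by
    simp only [sqNorm, lin_apply]; ring
  simp only [Prod.map_fst, Prod.map_snd, hswap, hIm, pairSum, hnorm, neg_mul]

lemma abs_pairMoment_sqRe_sub_le (hxy : det x y ≠ 0) :
    |pairMoment f (fun p => sqRe p.1) x y -
      pairMoment f (fun p => sqRe p.1) (1, 0) (0, 1) / 2 * (cosTwoArg x - cosTwoArg y)| ≤ M := by
  obtain ⟨α, β, θ, ρ, hα, hβ, rfl, rfl⟩ := exists_eq_smul_rotation_boost hxy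
  rw [hf.pairMoment_smul hα hβ, cosTwoArg_smul hα, cosTwoArg_smul hβ,
    cosTwoArg_rotation_boost_sub, hf.pairMoment_sqRe_rotation, hf.pairMoment_sqIm_boost]
  set K := pairMoment f (fun p => sqRe p.1) (boost ρ (1, 0)) (boost ρ (0, 1))
  set K₀ := pairMoment f (fun p => sqRe p.1) (1, 0) (0, 1)
  have hcosh := Real.cosh_pos (2 * ρ)
  have hM : 0 ≤ M := (abs_nonneg _).trans (hf.abs_integral_crossWeight_le hxy)
  calc |Real.cos (2 * θ) * K - Real.sin (2 * θ) * 0 -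
          K₀ / 2 * (2 * (Real.cos (2 * θ) / Real.cosh (2 * ρ)))|
      = |Real.cos (2 * θ)| * (|Real.cosh (2 * ρ) * K - K₀| / Real.cosh (2 * ρ)) := by
        rw [show Real.cos (2 * θ) * K - Real.sin (2 * θ) * 0 -
            K₀ / 2 * (2 * (Real.cos (2 * θ) / Real.cosh (2 * ρ))) =
            Real.cos (2 * θ) * ((Real.cosh (2 * ρ) * K - K₀) / Real.cosh (2 * ρ)) by
              field_simp; ring,
          abs_mul, abs_div, abs_of_pos hcosh]
    _ ≤ 1 * (M * |Real.sinh (2 * ρ)| / Real.cosh (2 * ρ)) := by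
        gcongr
        · exact Real.abs_cos_le_one _
        · exact hf.abs_cosh_mul_pairMoment_sub_le ρ
    _ ≤ M := by
        rw [one_mul, div_le_iff₀ hcosh]
        exact mul_le_mul_of_nonneg_left (abs_sinh_lt_cosh _).le hM

end Quasicocycle

/-- The moment of `f x y z` against a polynomial `P` for the Gaussian measure. -/
noncomputable def moment (f : Plane → Plane → Plane → Plane → ℝ) (P : Plane → ℝ)
    (x y z : Plane) : ℝ :=
  ∫ w, f x y z w * (P w * Real.exp (-sqNorm w))

lemma integral_pair_fst_mul (F W : Plane → ℝ) :
    ∫ p : Plane × Plane, F p.1 * (W p.1 * Real.exp (-pairSum sqNorm p)) =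
      ∫ w, F w * (W w * Real.exp (-sqNorm w)) := by
  have h := integral_mul_exp_neg_pairSum sqNorm (fun w => F w * W w) 1
  simpa [mul_assoc, integral_exp_neg_sqNorm] using h

lemma integral_pair_snd_mul_sqRe (F : Plane → ℝ) :
    ∫ p : Plane × Plane, F p.2 * (sqRe p.1 * Real.exp (-pairSum sqNorm p)) = 0 :=
  integral_eq_zero_of_comp_eq_neg
    (measurePreserving_quarterTurn.prod (MeasurePreserving.id volume)) fun p => by
      simp [pairSum, sqNorm_quarterTurn, sqRe_quarterTurn]

namespace Quasicocycle

variable {f : Plane → Plane → Plane → Plane → ℝ} {S M : ℝ} (hf : Quasicocycle f S M)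
  {x y z : Plane}

include hf

/- In the coboundary, the approximation of the pair moments by differences of `cosTwoArg`
telescopes. -/
lemma abs_moment_sqRe_le (hxy : det x y ≠ 0) (hxz : det x z ≠ 0) (hyz : det y z ≠ 0) :
    |moment f sqRe x y z| ≤ 4 * M := by
  have hB : Integrable fun p : Plane × Plane => sqNorm p.1 * Real.exp (-pairSum sqNorm p) := by
    simpa using integrable_mul_exp_neg_pairSum (b := 1) integrable_sqNorm_mul_exp_neg
      (by simpa using integrable_exp_neg_sqNorm)
  have h := hf.abs_integral_coboundary_le (measurable_const (a := x)) (measurable_const (a := y))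
    (measurable_const (a := z)) measurable_fst measurable_snd
    (W := fun p => sqRe p.1 * Real.exp (-pairSum sqNorm p)) (by fun_prop) (fun p => ?_) hB
    (hf.ae_abs_coboundary_le hf.defect_le hxy hxz hyz)
  · have hone := integral_pair_fst_mul 1 sqNorm
    simp only [Pi.one_apply, one_mul, integral_sqNorm_mul_exp_neg] at hone
    rw [hone, integral_pair_snd_mul_sqRe, integral_pair_fst_mul, ← moment, ← pairMoment,
      ← pairMoment, ← pairMoment] at h
    have h₁ := _root_.abs_le.1 (hf.abs_pairMoment_sqRe_sub_le hyz)
    have h₂ := _root_.abs_le.1 (hf.abs_pairMoment_sqRe_sub_le hxz)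
    have h₃ := _root_.abs_le.1 (hf.abs_pairMoment_sqRe_sub_le hxy)
    rw [_root_.abs_le] at h ⊢
    constructor <;> linarith
  · rw [abs_mul, Real.abs_exp]
    exact mul_le_mul_of_nonneg_right (abs_sqRe_le _) (Real.exp_pos _).le

lemma moment_squeeze (P : Plane → ℝ) (x y z : Plane) (t : ℝ) :
    moment f P (squeeze t x) (squeeze t y) (squeeze t z) = ∫ w, f x y z w * (P (squeeze t w) *
      Real.exp (-(Real.cosh (2 * t) * sqNorm w + Real.sinh (2 * t) * sqRe w))) := by
  rw [moment, ← integral_comp_lin (by rw [squeeze_det t, abs_one]), ← squeeze]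
  simp only [hf.squeeze, sqNorm_squeeze]

lemma hasDerivAt_moment_one_squeeze (x y z : Plane) (t : ℝ) :
    HasDerivAt (fun t => moment f 1 (squeeze t x) (squeeze t y) (squeeze t z))
      (-2 * moment f sqRe (squeeze t x) (squeeze t y) (squeeze t z)) t := by
  have hmeas : Measurable fun w => f x y z w :=
    hf.measurable_comp measurable_const measurable_const measurable_const measurable_id
  have h := expIntegrable_sqNorm.hasDerivAt_integral (A := S) (m := sqRe) (k := 0) (κ := 0)
    hmeas (fun w => ?_) measurable_sqRe abs_sqRe_le measurable_zero (by simp)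
    hasDerivAt_cosh_two_mul hasDerivAt_sinh_two_mul (by fun_prop) (by fun_prop) (t₀ := t)
    (by simpa using abs_sinh_lt_cosh _)
  · simp only [Pi.zero_apply, add_zero] at h
    simp only [hf.moment_squeeze, Pi.one_apply, one_mul, sqRe_squeeze]
    refine h.congr_deriv ?_
    rw [← integral_const_mul, ← integral_neg]
    congr! 2 with _
    ring
  · have hS := (abs_nonneg _).trans (hf.abs_le x y z w)
    exact (hf.abs_le x y z w).trans (by nlinarith [sqNorm_nonneg w])

lemma abs_moment_one_squeeze_sub_le (hxy : det x y ≠ 0) (hxz : det x z ≠ 0) (hyz : det y z ≠ 0)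
    (t : ℝ) :
    |moment f 1 (squeeze t x) (squeeze t y) (squeeze t z) - moment f 1 x y z| ≤ 8 * M * |t| := by
  have hdet {u v : Plane} (h : det u v ≠ 0) (t : ℝ) : det (squeeze t u) (squeeze t v) ≠ 0 := by
    rwa [squeeze, det_lin, squeeze_det, one_mul]
  have hre (t : ℝ) := hf.abs_moment_sqRe_le (hdet hxy t) (hdet hxz t) (hdet hyz t)
  have hM := (abs_nonneg _).trans (hre 0)
  have h := abs_sub_le_abs_sub_of_hasDerivAt (hf.hasDerivAt_moment_one_squeeze x y z)
    (fun t => (hasDerivAt_id t).const_mul (8 * M)) (fun t => ?_) 0 t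
  · have h0 (w : Plane) : squeeze 0 w = w := by simp [squeeze, lin_apply]
    simpa [h0, abs_mul, abs_of_nonneg (show 0 ≤ M by linarith)] using h
  · rw [abs_mul, abs_neg, abs_two]
    linarith [hre t]

end Quasicocycle

namespace Quasicocycle

variable {f : Plane → Plane → Plane → Plane → ℝ} {S M : ℝ} (hf : Quasicocycle f S M)

include hf

lemma moment_smul {α β γ : ℝ} (hα : α ≠ 0) (hβ : β ≠ 0) (hγ : γ ≠ 0) (P : Plane → ℝ)
    (x y z : Plane) : moment f P (α • x) (β • y) (γ • z) = moment f P x y z := by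
  simp only [moment, hf.smul₁ hα, hf.smul₂ hβ, hf.smul₃ hγ]

lemma moment_swap₁₂ (P : Plane → ℝ) (x y z : Plane) : moment f P y x z = -moment f P x y z := by
  simp only [moment, hf.swap₁₂ x y, neg_mul, integral_neg]

lemma moment_swap₂₃ (P : Plane → ℝ) (x y z : Plane) : moment f P x z y = -moment f P x y z := by
  simp only [moment, hf.swap₂₃ x y, neg_mul, integral_neg]

lemma moment_rotate (P : Plane → ℝ) (x y z : Plane) : moment f P y z x = moment f P x y z := by
  rw [hf.moment_swap₂₃, hf.moment_swap₁₂, neg_neg]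

/- A conformal map becomes an isometry after rescaling, and `f` ignores the scale. -/
lemma moment_one_lin_of_conformal {a b c d r : ℝ} (hr : r ≠ 0) (hdet : |a * d - b * c| = r ^ 2)
    (hnorm : ∀ w, sqNorm (lin a b c d w) = r ^ 2 * sqNorm w) (x y z : Plane) :
    moment f 1 (lin a b c d x) (lin a b c d y) (lin a b c d z) = moment f 1 x y z := by
  have hlin (w : Plane) : lin (a / r) (b / r) (c / r) (d / r) w = r⁻¹ • lin a b c d w := by
    ext <;> simp only [lin_apply, Prod.smul_fst, Prod.smul_snd, smul_eq_mul] <;> ring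
  have hscale (w : Plane) : sqNorm (r⁻¹ • lin a b c d w) = sqNorm w := by
    have h (u : Plane) : sqNorm (r⁻¹ • u) = r⁻¹ ^ 2 * sqNorm u := by
      simp only [sqNorm, Prod.smul_fst, Prod.smul_snd, smul_eq_mul]; ring
    rw [h, hnorm, ← mul_assoc, ← mul_pow, inv_mul_cancel₀ hr, one_pow, one_mul]
  have hunit : |a / r * (d / r) - b / r * (c / r)| = 1 := by
    rw [show a / r * (d / r) - b / r * (c / r) = (a * d - b * c) / r ^ 2 by ring, abs_div, hdet,
      abs_of_nonneg (sq_nonneg r), div_self (pow_ne_zero 2 hr)]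
  have hne : a * d - b * c ≠ 0 := abs_pos.1 (by rw [hdet]; positivity)
  rw [moment, ← integral_comp_lin hunit]
  simp only [hlin, hscale, hf.smul₄ (inv_ne_zero hr), hf.lin hne, moment, Pi.one_apply]

lemma moment_one_quarterTurn (x y z : Plane) :
    moment f 1 (lin 0 (-1) 1 0 x) (lin 0 (-1) 1 0 y) (lin 0 (-1) 1 0 z) = moment f 1 x y z :=
  hf.moment_one_lin_of_conformal one_ne_zero (by norm_num)
    (fun w => by rw [sqNorm_quarterTurn, one_pow, one_mul]) x y z

lemma moment_one_lin_symm {a b : ℝ} (h : 0 < a ^ 2 + b ^ 2) (x y z : Plane) :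
    moment f 1 (lin a b b (-a) x) (lin a b b (-a) y) (lin a b b (-a) z) = moment f 1 x y z := by
  have hsq : √(a ^ 2 + b ^ 2) ^ 2 = a ^ 2 + b ^ 2 := Real.sq_sqrt h.le
  refine hf.moment_one_lin_of_conformal (Real.sqrt_pos.2 h).ne' ?_ (fun w => ?_) x y z
  · rw [hsq, abs_of_neg] <;> nlinarith
  · rw [hsq]; simp only [sqNorm, lin_apply]; ring

/- The triple is a squeezed version of `(1, k²), (k², 1), (-1, 1)`, whose moment vanishes by
reflection in the diagonal. -/
lemma abs_moment_one_le {k : ℝ} (hk0 : 0 < k) (hk1 : k < 1) :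
    |moment f 1 (1, k) (k ^ 3, 1) (-k, 1)| ≤ 4 * M * |Real.log k| := by
  have hk2 : k ^ 2 < 1 := by nlinarith
  have hsymm : moment f 1 (1, k ^ 2) (k ^ 2, 1) (-1, 1) = 0 := by
    have h := hf.moment_one_lin_symm (a := 0) (b := 1) (by norm_num) (1, k ^ 2) (k ^ 2, 1) (-1, 1)
    have hneg := hf.moment_smul one_ne_zero one_ne_zero (neg_ne_zero.2 one_ne_zero) 1
      (k ^ 2, 1) (1, k ^ 2) (-1, 1)
    rw [hf.moment_swap₁₂ _ (1, k ^ 2)] at hneg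
    simp only [lin_apply, Prod.smul_mk, smul_eq_mul, neg_mul, one_mul, zero_mul, zero_add, add_zero,
      neg_neg, neg_zero] at h hneg
    linarith
  have hlip := hf.abs_moment_one_squeeze_sub_le (x := (1, k ^ 2)) (y := (k ^ 2, 1)) (z := (-1, 1))
    (by simp only [det]; nlinarith) (by simp only [det]; nlinarith) (by simp only [det]; nlinarith)
    (Real.log k / 2)
  set r := Real.exp (Real.log k / 2) with hr
  have hr0 : 0 < r := Real.exp_pos _
  have hrk : k = r ^ 2 := by
    rw [hr, ← Real.exp_nat_mul, Nat.cast_ofNat, mul_div_cancel₀ _ two_ne_zero, Real.exp_log hk0]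
  have hsqueeze (a b : ℝ) : squeeze (Real.log k / 2) (a, b) = (r * a, r⁻¹ * b) := by
    simp [squeeze, lin_apply, Real.exp_neg, ← hr]
  have hx : squeeze (Real.log k / 2) (1, k ^ 2) = r • (1, k) := by
    rw [hsqueeze, hrk]; ext <;> simp; field_simp
  have hy : squeeze (Real.log k / 2) (k ^ 2, 1) = r⁻¹ • (k ^ 3, 1) := by
    rw [hsqueeze, hrk]; ext <;> simp; field_simp
  have hz : squeeze (Real.log k / 2) (-1, 1) = r⁻¹ • (-k, 1) := by
    rw [hsqueeze, hrk]; ext <;> simp; field_simp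
  rw [hsymm, sub_zero, hx, hy, hz, hf.moment_smul hr0.ne' (inv_ne_zero hr0.ne')
    (inv_ne_zero hr0.ne'), abs_div, abs_two] at hlip
  linarith

end Quasicocycle

namespace Quasicocycle

variable {f : Plane → Plane → Plane → Plane → ℝ} {S M : ℝ} (hf : Quasicocycle f S M) {k : ℝ}

include hf

/- The quarter turn permutes the four lines of the rectangle. -/
lemma moment_one_rectangle_rotate :
    moment f 1 (k ^ 3, 1) (-k, 1) (-1, k ^ 3) = moment f 1 (1, k) (k ^ 3, 1) (-1, k ^ 3) ∧
      moment f 1 (1, k) (-k, 1) (-1, k ^ 3) = moment f 1 (1, k) (k ^ 3, 1) (-k, 1) := by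
  have hneg (x y z : Plane) := hf.moment_smul one_ne_zero one_ne_zero
    (neg_ne_zero.2 one_ne_zero) 1 x y z
  have h₁ := hf.moment_one_quarterTurn (1, k) (k ^ 3, 1) (-1, k ^ 3)
  have h₂ := hf.moment_one_quarterTurn (1, k) (k ^ 3, 1) (-k, 1)
  have hneg₁ := hneg (-k, 1) (-1, k ^ 3) (k ^ 3, 1)
  have hneg₂ := hneg (-k, 1) (-1, k ^ 3) (1, k)
  simp only [lin_apply, Prod.smul_mk, smul_eq_mul, neg_mul, one_mul, zero_mul, zero_add, add_zero,
    mul_one] at h₁ h₂ hneg₁ hneg₂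
  rw [hneg₁, hf.moment_rotate 1 (k ^ 3, 1)] at h₁
  rw [hneg₂, hf.moment_rotate 1 (1, k)] at h₂
  exact ⟨h₁, h₂⟩

/- The reflection exchanging the lines through `(1, k)` and `(k³, 1)` also exchanges the other two
lines of the rectangle. -/
lemma moment_one_rectangle_reflect :
    moment f 1 (1, k) (k ^ 3, 1) (-1, k ^ 3) = -moment f 1 (1, k) (k ^ 3, 1) (-k, 1) := by
  have h := hf.moment_one_lin_symm (a := k ^ 3 - k) (b := 1 + k ^ 4) (by positivity)
    (1, k) (k ^ 3, 1) (-k, 1)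
  have hx : lin (k ^ 3 - k) (1 + k ^ 4) (1 + k ^ 4) (-(k ^ 3 - k)) (1, k) =
      (1 + k ^ 2) • (k ^ 3, 1) := by
    ext <;> simp [lin_apply] <;> ring
  have hy : lin (k ^ 3 - k) (1 + k ^ 4) (1 + k ^ 4) (-(k ^ 3 - k)) (k ^ 3, 1) =
      (1 + k ^ 6) • (1, k) := by
    ext <;> simp [lin_apply] <;> ring
  have hz : lin (k ^ 3 - k) (1 + k ^ 4) (1 + k ^ 4) (-(k ^ 3 - k)) (-k, 1) =
      (-(1 + k ^ 2)) • (-1, k ^ 3) := by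
    ext <;> simp [lin_apply] <;> ring
  have hpos : 1 + k ^ 2 ≠ 0 := by positivity
  rw [hx, hy, hz, hf.moment_smul hpos (by positivity) (neg_ne_zero.2 hpos),
    hf.moment_swap₁₂] at h
  linarith

lemma abs_le_of_ae_coboundary_le {x y z w : Plane} (h : ∀ᵐ v, |coboundary f x y z w v| ≤ M) :
    |moment f 1 y z w - moment f 1 x z w + moment f 1 x y w - moment f 1 x y z + f x y z w| ≤
      M := by
  have hint := hf.abs_integral_coboundary_le (measurable_const (a := x)) (measurable_const (a := y))
    (measurable_const (a := z)) (measurable_const (a := w)) measurable_id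
    (W := fun v => Real.exp (-sqNorm v)) (by fun_prop) (fun v => (Real.abs_exp _).le)
    integrable_exp_neg_sqNorm h
  simpa only [integral_const_mul, integral_exp_neg_sqNorm, mul_one, moment, Pi.one_apply, one_mul,
    id_eq] using hint

lemma abs_rectangle_le (hk0 : 0 < k) (hk1 : k < 1)
    (h : ∀ᵐ v, |coboundary f (1, k) (-1, k ^ 3) (k ^ 3, 1) (-k, 1) v| ≤ M) :
    |f (1, k) (-1, k ^ 3) (k ^ 3, 1) (-k, 1)| ≤ M + 16 * M * |Real.log k| := by
  obtain ⟨hrotate₁, hrotate₂⟩ := hf.moment_one_rectangle_rotate (k := k)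
  have hreflect := hf.moment_one_rectangle_reflect (k := k)
  have hint := _root_.abs_le.1 (hf.abs_le_of_ae_coboundary_le h)
  have hγ := _root_.abs_le.1 (hf.abs_moment_one_le hk0 hk1)
  rw [← hf.moment_rotate 1 (-1, k ^ 3), hf.moment_swap₂₃ 1 (1, k) (-k, 1) (-1, k ^ 3),
    hf.moment_swap₂₃ 1 (1, k) (k ^ 3, 1) (-1, k ^ 3)] at hint
  rw [_root_.abs_le]
  constructor <;> linarith

end Quasicocycle

/- Every cross-ratio in `(0, 1/2]` is that of a rectangle. -/
lemma exists_rectangle {l : ℝ} (h0 : 0 < l) (h1 : l ≤ 1 / 2) :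
    ∃ k, 0 < k ∧ k < 1 ∧ |Real.log k| ≤ 1 / 2 ∧ (1 - k ^ 2) ^ 2 = l * (1 - k ^ 2 + k ^ 4) := by
  set q := √(l / (1 - l)) with hq
  have hq0 : 0 < q := Real.sqrt_pos.2 (div_pos h0 (by linarith))
  have hq1 : q ≤ 1 := Real.sqrt_le_one.2 ((div_le_one (by linarith)).2 (by linarith))
  set τ := Real.arsinh (q / 2)
  have hτ0 : 0 < τ := Real.arsinh_pos_iff.2 (by positivity)
  have hsinh : Real.sinh τ = q / 2 := Real.sinh_arsinh _
  refine ⟨Real.exp (-τ), Real.exp_pos _, by simpa using hτ0, ?_, ?_⟩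
  · rw [Real.log_exp, abs_neg, abs_of_pos hτ0]
    linarith [Real.self_le_sinh_iff.2 hτ0.le]
  · have hk : Real.exp τ * Real.exp (-τ) = 1 := by
      rw [← Real.exp_add, add_neg_cancel, Real.exp_zero]
    have hlin : 1 - Real.exp (-τ) ^ 2 = q * Real.exp (-τ) := by
      rw [Real.sinh_eq] at hsinh
      linear_combination 2 * Real.exp (-τ) * hsinh - hk
    have hsq : q ^ 2 = l * (1 + q ^ 2) := by
      rw [hq, Real.sq_sqrt (div_pos h0 (by linarith)).le]
      have : 1 - l ≠ 0 := by linarith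
      field_simp
      ring
    set k := Real.exp (-τ)
    linear_combination (1 - l) * (1 - k ^ 2 + q * k) * hlin + k ^ 2 * hsq

lemma crossRatio_rectangle {k l : ℝ} (hk0 : 0 < k)
    (hkl : (1 - k ^ 2) ^ 2 = l * (1 - k ^ 2 + k ^ 4)) :
    crossRatio (1, k) (-1, k ^ 3) (k ^ 3, 1) (-k, 1) = l := by
  simp only [crossRatio, det]
  rw [div_eq_iff (by nlinarith [pow_pos hk0 2, pow_pos hk0 6, pow_pos hk0 4, pow_pos hk0 8])]
  linear_combination -(1 + k ^ 2) ^ 2 * hkl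

section BoundedSolution

variable {L : ℝ → ℝ} {S M : ℝ}

lemma quasicocycle_cochain (hLm : Measurable L) (hS : ∀ t, |L t| ≤ S) (hL : ∀ t, L (1 - t) = -L t)
    (h : ∀ᵐ p : ℝ × ℝ, p ∈ P2 → |fiveTerm L p| ≤ M) : Quasicocycle (cochain L) S M where
  toProjectiveCochain := projectiveCochain_cochain hL
  measurable := measurable_cochain hLm
  abs_le _ _ _ _ := abs_extend_le hS _
  defect_le := ae_defect_cochain_le hL h

lemma ae_abs_le_of_le_half (hLm : Measurable L) (hS : ∀ t, |L t| ≤ S)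
    (hL : ∀ t, L (1 - t) = -L t) (hM : 0 ≤ M) (h : ∀ᵐ p : ℝ × ℝ, p ∈ P2 → |fiveTerm L p| ≤ M) :
    ∀ᵐ t, 0 < t → t ≤ 1 / 2 → |L t| ≤ 9 * M := by
  have hf := quasicocycle_cochain hLm hS hL h
  filter_upwards [hf.ae_forall_ae_abs_coboundary_le hf.defect_le] with l hl hl0 hl1
  obtain ⟨k, hk0, hk1, hlog, hkl⟩ := exists_rectangle hl0 hl1
  have hcr := crossRatio_rectangle hk0 hkl
  have hk4 : k ^ 4 < 1 := pow_lt_one₀ hk0.le hk1 (by norm_num)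
  have hbound := hf.abs_rectangle_le hk0 hk1 (hl _ _ _ _
    (by simp only [det]; nlinarith [pow_pos hk0 3]) (by simp only [det]; nlinarith)
    (by simp only [det]; nlinarith [pow_pos hk0 6]) (by simp only [det]; nlinarith) hcr)
  rw [cochain, hcr, extend_of_mem_Ioo ⟨hl0, by linarith⟩] at hbound
  nlinarith

lemma ae_abs_le_of_bounded (hLm : Measurable L) (hS : ∀ t, |L t| ≤ S) (hL : ∀ t, L (1 - t) = -L t)
    (hM : 0 ≤ M) (h : ∀ᵐ p : ℝ × ℝ, p ∈ P2 → |fiveTerm L p| ≤ M) :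
    ∀ᵐ t, t ∈ Ioo 0 1 → |L t| ≤ 9 * M := by
  have hhalf := ae_abs_le_of_le_half hLm hS hL hM h
  filter_upwards [hhalf,
    quasiMeasurePreserving_one_sub.ae hhalf] with t ht ht' htI
  rcases le_total t (1 / 2) with hle | hle
  · exact ht htI.1 hle
  · simpa only [hL, abs_neg] using ht' (by linarith [htI.2]) (by linarith)

end BoundedSolution

section LocalBound

lemma exists_measure_lt_abs_lt {α : Type*} [MeasurableSpace α] {μ : Measure α} [IsFiniteMeasure μ]
    {f : α → ℝ} (hf : Measurable f) {δ : ENNReal} (hδ : 0 < δ) :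
    ∃ K, μ {t | K < |f t|} < δ := by
  have h := tendsto_measure_norm_gt_of_isTightMeasureSet
    (isTightMeasureSet_singleton (μ := μ.map f))
  simp only [mem_singleton_iff, iSup_iSup_eq_left] at h
  obtain ⟨K, hK⟩ := (h.eventually_lt_const hδ).exists
  rw [Measure.map_apply hf (measurableSet_lt measurable_const measurable_norm)] at hK
  exact ⟨K, hK⟩

variable {U N : Set ℝ} {K : NNReal}

lemma volume_inter_preimage_le {φ : ℝ → ℝ} (hφ : AntilipschitzWith K (U.domRestrict φ)) :
    volume (U ∩ φ ⁻¹' N) ≤ K * volume N := by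
  have h := hφ.hausdorffMeasure_preimage_le zero_le_one N
  rw [← (isometry_subtype_coe (s := U)).hausdorffMeasure_image (Or.inl zero_le_one)] at h
  rwa [domRestrict_eq, preimage_comp, Subtype.image_preimage_coe, hausdorffMeasure_real,
    ENNReal.rpow_one] at h

lemma exists_mem_forall_notMem {ι : Type*} [Fintype ι] {φ : ι → ℝ → ℝ} {Q : ℝ → Prop}
    (hφ : ∀ i, AntilipschitzWith K (U.domRestrict (φ i)))
    (hN : Fintype.card ι * (K * volume N) < volume U) (hQ : ∀ᵐ y, Q y) :
    ∃ y ∈ U, Q y ∧ ∀ i, φ i y ∉ N := by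
  by_contra! h
  refine hN.not_ge ?_
  calc volume U ≤ volume ((⋃ i, U ∩ φ i ⁻¹' N) ∪ {y | ¬Q y}) := measure_mono fun y hy => by
        by_cases hQy : Q y
        · obtain ⟨i, hi⟩ := h y hy hQy
          exact Or.inl (mem_iUnion.2 ⟨i, hy, hi⟩)
        · exact Or.inr hQy
    _ ≤ volume (⋃ i, U ∩ φ i ⁻¹' N) := by
        simpa only [ae_iff.1 hQ, add_zero] using
          measure_union_le (μ := volume) (⋃ i, U ∩ φ i ⁻¹' N) {y | ¬Q y}
    _ ≤ ∑ i, volume (U ∩ φ i ⁻¹' N) := measure_iUnion_fintype_le _ _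
    _ ≤ ∑ _i : ι, K * volume N := Finset.sum_le_sum fun i _ => volume_inter_preimage_le (hφ i)
    _ = Fintype.card ι * (K * volume N) := by rw [Finset.sum_const, nsmul_eq_mul]; rfl

variable {x : ℝ}

/-- The arguments of `L` in `fiveTerm L (x, y)` other than `x`, as functions of `y`. -/
noncomputable def sideArg (x : ℝ) : Fin 4 → ℝ → ℝ :=
  ![fun y => y, fun y => x / y, fun y => (y - 1) / (x - 1), fun y => x * (y - 1) / (y * (x - 1))]

lemma sideArg_mem_Ioo {y : ℝ} (h : (x, y) ∈ P2) (i : Fin 4) : sideArg x i y ∈ Ioo 0 1 := by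
  fin_cases i
  · exact ⟨h.1.trans h.2.1, h.2.2⟩
  · exact div_mem_Ioo h
  · exact sub_one_div_mem_Ioo h
  · exact fifth_mem_Ioo h

lemma abs_fiveTerm_sub_le {L : ℝ → ℝ} {y K : ℝ} (h : ∀ i, |L (sideArg x i y)| ≤ K) :
    |fiveTerm L (x, y) - L x| ≤ 4 * K := by
  have h₀ := abs_le.1 (h 0)
  have h₁ := abs_le.1 (h 1)
  have h₂ := abs_le.1 (h 2)
  have h₃ := abs_le.1 (h 3)
  simp only [sideArg, Matrix.cons_val] at h₀ h₁ h₂ h₃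
  rw [fiveTerm, abs_le]
  constructor <;> linarith

lemma sub_eq_mul_sideArg_sub {y z : ℝ} (hx0 : x ≠ 0) (hx1 : x - 1 ≠ 0) (hy : y ≠ 0) (hz : z ≠ 0)
    (i : Fin 4) : y - z =
      ![1, -(y * z / x), x - 1, (x - 1) * (y * z / x)] i * (sideArg x i y - sideArg x i z) := by
  fin_cases i <;> simp [sideArg] <;> field_simp <;> ring

lemma antilipschitzWith_sideArg (h0 : 1 / 12 ≤ x) (h1 : x ≤ 1 / 2) (i : Fin 4) :
    AntilipschitzWith 12 ((Ioo x 1).domRestrict (sideArg x i)) := by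
  refine AntilipschitzWith.of_le_mul_dist fun ⟨y, hy⟩ ⟨z, hz⟩ => ?_
  have hx : 0 < x := by linarith
  have hy0 := hx.trans hy.1
  have hz0 := hx.trans hz.1
  have hyz : |y * z / x| ≤ 12 := by
    rw [abs_of_pos (by positivity), div_le_iff₀ hx]
    nlinarith [mul_lt_one_of_nonneg_of_lt_one_left hy0.le hy.2 hz.2.le]
  have hx1 : |x - 1| ≤ 1 := abs_le.2 ⟨by linarith, by linarith⟩
  rw [Subtype.dist_eq, Real.dist_eq, Real.dist_eq, domRestrict_apply, domRestrict_apply,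
    sub_eq_mul_sideArg_sub hx.ne' (by linarith) hy0.ne' hz0.ne' i, abs_mul]
  refine mul_le_mul_of_nonneg_right ?_ (abs_nonneg _)
  fin_cases i
  · norm_num
  · exact (abs_neg _).trans_le hyz
  · exact hx1.trans (by norm_num)
  · exact (abs_mul _ _).trans_le ((mul_le_of_le_one_left (abs_nonneg _) hx1).trans hyz)

end LocalBound

section Boundedness

variable {L : ℝ → ℝ} {M : ℝ}

lemma exists_ae_abs_le_on_Icc (hLm : Measurable L)
    (h : ∀ᵐ p : ℝ × ℝ, p ∈ P2 → |fiveTerm L p| ≤ M) :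
    ∃ B, ∀ᵐ t, t ∈ Icc (1 / 12) (1 / 2) → |L t| ≤ B := by
  obtain ⟨K, hK⟩ := exists_measure_lt_abs_lt (μ := volume.restrict (Ioo 0 1)) hLm
    (δ := ENNReal.ofReal (1 / 2) / 48) (by simp)
  set N := {t | K < |L t|} ∩ Ioo 0 1
  replace hK : volume N < ENNReal.ofReal (1 / 2) / 48 := by
    rwa [Measure.restrict_apply' measurableSet_Ioo] at hK
  refine ⟨4 * K + M, ?_⟩
  filter_upwards [Measure.ae_ae_of_ae_prod h] with x hx ⟨hx0, hx1⟩
  have hN : (Fintype.card (Fin 4) : ENNReal) * ((12 : NNReal) * volume N) < volume (Ioo x 1) := by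
    calc (Fintype.card (Fin 4) : ENNReal) * ((12 : NNReal) * volume N) = volume N * 48 := by
          rw [Fintype.card_fin, ← mul_assoc, mul_comm]; norm_num
      _ < ENNReal.ofReal (1 / 2) := (ENNReal.lt_div_iff_mul_lt (by simp) (by simp)).1 hK
      _ ≤ volume (Ioo x 1) := by
          rw [Real.volume_Ioo]
          exact ENNReal.ofReal_le_ofReal (by linarith)
  obtain ⟨y, hy, hxy, hyN⟩ := exists_mem_forall_notMem (antilipschitzWith_sideArg hx0 hx1) hN hx
  have hP : (x, y) ∈ P2 := ⟨by linarith, hy⟩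
  have hside := abs_le.1 (abs_fiveTerm_sub_le fun i => not_lt.1 fun hlt =>
    hyN i ⟨hlt, sideArg_mem_Ioo hP i⟩)
  have hfive := abs_le.1 (hxy hP)
  rw [abs_le]
  constructor <;> linarith

end Boundedness

section Chain

variable {L : ℝ → ℝ} {M B s x e : ℝ}

/-- The map whose iterates turn the five-term relations at `(x, 1/e)` into a telescoping sum. -/
noncomputable def chainMap (x e : ℝ) : ℝ := (e - 1) / (1 - x)

lemma chainMap_mem_Ioo (hx : x ∈ Ioo 0 (1 / 12)) (he : 1 < e) :
    chainMap x e ∈ Ioo (e - 1) (12 / 11 * (e - 1)) := by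
  have hx1 : 0 < 1 - x := by linarith [hx.2]
  rw [chainMap, mem_Ioo, lt_div_iff₀ hx1, div_lt_iff₀ hx1]
  constructor <;> nlinarith [hx.1, hx.2]

lemma fiveTerm_inv (hx : x ≠ 1) (he : e ≠ 0) : fiveTerm L (x, e⁻¹) =
    L x - L (x * e) + L (x * chainMap x e) - L e⁻¹ - L ((e⁻¹ - 1) / (x - 1)) := by
  have hx1 : x - 1 ≠ 0 := sub_ne_zero.2 hx
  have harg : x * (e⁻¹ - 1) / (e⁻¹ * (x - 1)) = x * chainMap x e := by
    rw [chainMap, ← neg_sub x 1, div_neg]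
    field_simp
    ring
  rw [fiveTerm, harg, div_inv_eq_mul]
  ring

lemma abs_chain_le (hx : x ∈ Ioo 0 (1 / 12)) (he : e ∈ Ioo (5 / 2) 5)
    (h : (x, e⁻¹) ∈ P2 → |fiveTerm L (x, e⁻¹)| ≤ M)
    (hB : ∀ t ∈ ({e⁻¹, (e⁻¹ - 1) / (x - 1)} : Set ℝ), t ∈ Icc (1 / 12) (11 / 12) → |L t| ≤ B) :
    |L x - L (x * e) + L (x * chainMap x e)| ≤ M + 2 * B := by
  obtain ⟨hx0, hx1⟩ := hx
  have he0 : 0 < e := by linarith [he.1]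
  have hinv : e⁻¹ ∈ Ioo (1 / 5) (2 / 5) := by
    constructor
    · rw [one_div]; exact inv_strictAnti₀ he0 he.2
    · rw [← inv_div]; exact inv_strictAnti₀ (by norm_num) he.1
  have h₁ := abs_le.1 (hB e⁻¹ (by simp) ⟨by linarith [hinv.1], by linarith [hinv.2]⟩)
  have h₂ := abs_le.1 (hB ((e⁻¹ - 1) / (x - 1)) (by simp)
    ⟨by rw [le_div_iff_of_neg (by linarith)]; linarith [hinv.2],
      by rw [div_le_iff_of_neg (by linarith)]; linarith [hinv.1]⟩)
  have hfive := abs_le.1 (h ⟨hx0, by linarith [hinv.1], by linarith [hinv.2]⟩)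
  rw [fiveTerm_inv (by linarith) he0.ne'] at hfive
  rw [abs_le]
  constructor <;> linarith

lemma ae_ae_abs_chain_le (h : ∀ᵐ p : ℝ × ℝ, p ∈ P2 → |fiveTerm L p| ≤ M)
    (hB : ∀ᵐ t, t ∈ Icc (1 / 12) (11 / 12) → |L t| ≤ B) :
    ∀ᵐ x, x ∈ Ioo 0 (1 / 12) → ∀ᵐ e, e ∈ Ioo (5 / 2) 5 →
      |L x - L (x * e) + L (x * chainMap x e)| ≤ M + 2 * B := by
  filter_upwards [Measure.ae_ae_of_ae_prod h] with x hx hxI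
  have hsub := (quasiMeasurePreserving_sub_mul 1
    (inv_ne_zero (show x - 1 ≠ 0 by linarith [hxI.2]))).ae hB
  filter_upwards [quasiMeasurePreserving_inv.ae hx, quasiMeasurePreserving_inv.ae hB,
    quasiMeasurePreserving_inv.ae hsub] with e he hB₁ hB₂ heI
  refine abs_chain_le hxI heI he ?_
  rintro t (rfl | rfl)
  exacts [hB₁, hB₂]

lemma ae_abs_le_of_ae_abs_le_three_halves_mul {a : ℝ} (ha : 0 < a)
    (h : ∀ᵐ p : ℝ × ℝ, p ∈ P2 → |fiveTerm L p| ≤ M)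
    (hB : ∀ᵐ t, t ∈ Icc (1 / 12) (11 / 12) → |L t| ≤ B)
    (hs : ∀ᵐ t, t ∈ Icc (3 / 2 * a) (1 / 2) → |L t| ≤ s) (hBs : B ≤ s) (hMs : 6 * B + 3 * M ≤ s) :
    ∀ᵐ t, t ∈ Icc a (1 / 2) → |L t| ≤ s := by
  filter_upwards [ae_ae_abs_chain_le h hB, hB] with x hchain hBx hxI
  rcases le_or_gt (1 / 12) x with hx12 | hx12
  · exact (hBx ⟨hx12, by linarith [hxI.2]⟩).trans hBs
  have hx0 : 0 < x := ha.trans_le hxI.1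
  have hx : x ∈ Ioo 0 (1 / 12) := ⟨hx0, hx12⟩
  have hA : Measure.QuasiMeasurePreserving (chainMap x) volume volume :=
    quasiMeasurePreserving_sub_mul 1 (inv_ne_zero (by linarith))
  have hs' : ∀ᵐ e, e ∈ Ioo (3 / 2) 5 → |L (x * e)| ≤ s := by
    filter_upwards [(quasiMeasurePreserving_sub_mul 0 hx0.ne').ae hs] with e he heI
    rw [sub_zero, mul_comm e] at he
    exact he ⟨by nlinarith [hxI.1, heI.1], by nlinarith [heI.2]⟩
  have hall := (hchain hx).and ((hA.ae (hchain hx)).and ((hA.ae (hA.ae (hchain hx))).and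
    (hs'.and (hA.ae (hA.ae (hA.ae hs'))))))
  obtain ⟨e, ⟨h₀, h₁, h₂, hfirst, hlast⟩, he⟩ :=
    (Measure.dense_of_ae hall).exists_mem_open isOpen_Ioo
      (nonempty_Ioo.2 (show 9 / 2 < 5 by norm_num))
  obtain ⟨hl₁, hu₁⟩ := chainMap_mem_Ioo hx (show 1 < e by linarith [he.1])
  obtain ⟨hl₂, hu₂⟩ := chainMap_mem_Ioo hx (show 1 < chainMap x e by linarith [he.1])
  obtain ⟨hl₃, hu₃⟩ := chainMap_mem_Ioo hx (show 1 < chainMap x (chainMap x e) by linarith [he.1])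
  replace h₀ := abs_le.1 (h₀ ⟨by linarith [he.1], he.2⟩)
  replace h₁ := abs_le.1 (h₁ ⟨by linarith [he.1], by linarith [he.2]⟩)
  replace h₂ := abs_le.1 (h₂ ⟨by linarith [he.1], by linarith [he.2]⟩)
  replace hfirst := abs_le.1 (hfirst ⟨by linarith [he.1], he.2⟩)
  replace hlast := abs_le.1 (hlast ⟨by linarith [he.1], by linarith [he.2]⟩)
  rw [abs_le]
  constructor <;> linarith

end Chain

section Boundedness

variable {L : ℝ → ℝ} {M s : ℝ}

lemma ae_abs_le_on_Icc_one_sub (hL : ∀ t, L (1 - t) = -L t) {a : ℝ}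
    (h : ∀ᵐ t, t ∈ Icc a (1 / 2) → |L t| ≤ s) : ∀ᵐ t, t ∈ Icc a (1 - a) → |L t| ≤ s := by
  filter_upwards [h, quasiMeasurePreserving_one_sub.ae h] with t ht ht' htI
  rcases le_total t (1 / 2) with hle | hge
  · exact ht ⟨htI.1, hle⟩
  · rw [hL, abs_neg] at ht'
    exact ht' ⟨by linarith [htI.2], by linarith⟩

lemma exists_ae_abs_le (hLm : Measurable L) (hL : ∀ t, L (1 - t) = -L t) (hM : 0 ≤ M)
    (h : ∀ᵐ p : ℝ × ℝ, p ∈ P2 → |fiveTerm L p| ≤ M) :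
    ∃ s, 0 ≤ s ∧ ∀ᵐ t, t ∈ Ioo 0 1 → |L t| ≤ s := by
  obtain ⟨B, hB⟩ := exists_ae_abs_le_on_Icc hLm h
  replace hB : ∀ᵐ t, t ∈ Icc (1 / 12) (1 / 2) → |L t| ≤ |B| :=
    hB.mono fun t ht htI => (ht htI).trans (le_abs_self B)
  have hB' : ∀ᵐ t, t ∈ Icc (1 / 12) (11 / 12) → |L t| ≤ |B| := by
    convert ae_abs_le_on_Icc_one_sub hL hB using 5
    norm_num
  have hBs : |B| ≤ 6 * |B| + 3 * M := by linarith [abs_nonneg B]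
  have hgeom (n : ℕ) :
      ∀ᵐ t, t ∈ Icc ((2 / 3) ^ n * (1 / 12)) (1 / 2) → |L t| ≤ 6 * |B| + 3 * M := by
    induction n with
    | zero =>
      rw [pow_zero, one_mul]
      exact hB.mono fun t ht htI => (ht htI).trans hBs
    | succ n ih =>
      refine ae_abs_le_of_ae_abs_le_three_halves_mul (by positivity) h hB' ?_ hBs le_rfl
      rwa [pow_succ, show (3 / 2 : ℝ) * ((2 / 3) ^ n * (2 / 3) * (1 / 12)) =
        (2 / 3) ^ n * (1 / 12) by ring]
  refine ⟨6 * |B| + 3 * M, by positivity, ?_⟩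
  filter_upwards [ae_all_iff.2 fun n => ae_abs_le_on_Icc_one_sub hL (hgeom n)] with t ht htI
  obtain ⟨n, hn⟩ := exists_pow_lt_of_lt_one (lt_min htI.1 (sub_pos.2 htI.2))
    (show (2 / 3 : ℝ) < 1 by norm_num)
  have hpos : (0 : ℝ) < (2 / 3) ^ n := by positivity
  exact ht n ⟨by linarith [hn.trans_le (min_le_left _ _)],
    by linarith [hn.trans_le (min_le_right _ _)]⟩

end Boundedness

section Conclusion

variable {L L' : ℝ → ℝ} {C M : ℝ}

lemma ae_fiveTerm_congr (h : ∀ᵐ t, t ∈ Ioo 0 1 → L t = L' t) :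
    ∀ᵐ p : ℝ × ℝ, p ∈ P2 → fiveTerm L p = fiveTerm L' p := by
  have hdivSwap : Measure.QuasiMeasurePreserving (fun p : ℝ × ℝ => p.2 / p.1) volume volume :=
    quasiMeasurePreserving_div.comp Measure.measurePreserving_swap.quasiMeasurePreserving
  have hdivOneSub := hdivSwap.comp (QuasiMeasurePreserving.prodMap
    quasiMeasurePreserving_one_sub quasiMeasurePreserving_one_sub)
  have hdivOneSubInv := hdivSwap.comp (QuasiMeasurePreserving.prodMap
    quasiMeasurePreserving_one_sub_inv quasiMeasurePreserving_one_sub_inv)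
  filter_upwards [Measure.quasiMeasurePreserving_fst.ae h, Measure.quasiMeasurePreserving_snd.ae h,
    quasiMeasurePreserving_div.ae h, hdivOneSub.ae h, hdivOneSubInv.ae h]
    with ⟨x, y⟩ h₁ h₂ h₃ h₄ h₅ hp
  obtain ⟨hx : 0 < x, hxy : x < y, hy : y < 1⟩ := id hp
  have hx1 : x - 1 ≠ 0 := by linarith
  have hfourth : (1 - y) / (1 - x) = (y - 1) / (x - 1) := by
    rw [← neg_sub y, ← neg_sub x, neg_div_neg_eq]
  have hfifth : (1 - y⁻¹) / (1 - x⁻¹) = x * (y - 1) / (y * (x - 1)) := by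
    have hy0 : y ≠ 0 := by linarith
    rw [← one_div, ← one_div, one_sub_div hx.ne', one_sub_div hy0]
    field_simp
  simp only [Prod.map_apply, Function.comp_apply, hfourth, hfifth] at h₁ h₂ h₃ h₄ h₅
  simp only [fiveTerm, h₁ ⟨hx, hxy.trans hy⟩, h₂ ⟨hx.trans hxy, hy⟩, h₃ (div_mem_Ioo hp),
    h₄ (sub_one_div_mem_Ioo hp), h₅ (fifth_mem_Ioo hp)]

lemma ae_abs_le_of_antisymmetric (hLm : Measurable L) (hL : ∀ t, L (1 - t) = -L t) (hM : 0 ≤ M)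
    (h : ∀ᵐ p : ℝ × ℝ, p ∈ P2 → |fiveTerm L p| ≤ M) :
    ∀ᵐ t, t ∈ Ioo 0 1 → |L t| ≤ 9 * M := by
  obtain ⟨s, hs, hLs⟩ := exists_ae_abs_le hLm hL hM h
  let T : ℝ → ℝ := fun t => if |L t| ≤ s then L t else 0
  have hTL : ∀ᵐ t, t ∈ Ioo 0 1 → T t = L t := hLs.mono fun t ht htI => if_pos (ht htI)
  have hTm : Measurable T :=
    hLm.ite (measurableSet_le (by fun_prop) measurable_const) measurable_const
  have hTs (t : ℝ) : |T t| ≤ s := by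
    simp only [T]
    split_ifs with ht
    exacts [ht, by rwa [abs_zero]]
  have hT (t : ℝ) : T (1 - t) = -T t := by
    simp only [T, hL, abs_neg]
    split_ifs <;> simp
  have hfive : ∀ᵐ p : ℝ × ℝ, p ∈ P2 → |fiveTerm T p| ≤ M := by
    filter_upwards [h, ae_fiveTerm_congr hTL] with p hp hTp hpP
    rw [hTp hpP]
    exact hp hpP
  filter_upwards [ae_abs_le_of_bounded hTm hTs hT hM hfive, hTL] with t ht hTt htI
  rw [← hTt htI]
  exact ht htI

lemma isOpen_P2 : IsOpen P2 :=
  (isOpen_lt continuous_const continuous_fst).inter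
    ((isOpen_lt continuous_fst continuous_snd).inter (isOpen_lt continuous_snd continuous_const))

lemma nonneg_of_ae_abs_le {f : ℝ × ℝ → ℝ} (h : ∀ᵐ p, p ∈ P2 → |f p| ≤ M) : 0 ≤ M := by
  have hne : P2.Nonempty := ⟨(1 / 3, 2 / 3), by norm_num [P2]⟩
  obtain ⟨p, hp, hpP⟩ := (Measure.dense_of_ae h).exists_mem_open isOpen_P2 hne
  exact (abs_nonneg _).trans (hp hpP)

lemma fiveTerm_sub_const (c : ℝ) (p : ℝ × ℝ) :
    fiveTerm (fun t => L t - c) p = fiveTerm L p + c := by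
  simp only [fiveTerm]
  ring

lemma ae_abs_le_of_reflection (hLm : AEMeasurable L (volume.restrict (Ioo 0 1)))
    (hL : ∀ᵐ t, t ∈ Ioo 0 1 → L (1 - t) = C - L t)
    (h : ∀ᵐ p : ℝ × ℝ, p ∈ P2 → |fiveTerm L p| ≤ M) :
    ∀ᵐ t, t ∈ Ioo 0 1 → |L t| ≤ 9 * M + 5 * |C| := by
  obtain ⟨G, hGm, hLG⟩ := hLm
  replace hLG : ∀ᵐ t, t ∈ Ioo 0 1 → L t = G t := (ae_restrict_iff' measurableSet_Ioo).1 hLG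
  let A : ℝ → ℝ := fun t => (G t - G (1 - t)) / 2
  have hA (t : ℝ) : A (1 - t) = -A t := by
    simp only [A, sub_sub_cancel]
    ring
  have hAL : ∀ᵐ t, t ∈ Ioo 0 1 → A t = L t - C / 2 := by
    filter_upwards [hLG, quasiMeasurePreserving_one_sub.ae hLG, hL] with t ht ht' hLt htI
    simp only [A]
    rw [← ht htI, ← ht' ⟨by linarith [htI.2], by linarith [htI.1]⟩, hLt htI]
    ring
  have hfive : ∀ᵐ p : ℝ × ℝ, p ∈ P2 → |fiveTerm A p| ≤ M + |C / 2| := by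
    filter_upwards [h, ae_fiveTerm_congr hAL] with p hp hAp hpP
    rw [hAp hpP, fiveTerm_sub_const]
    exact (abs_add_le _ _).trans (by gcongr; exact hp hpP)
  have hM : 0 ≤ M + |C / 2| := nonneg_of_ae_abs_le hfive
  filter_upwards [ae_abs_le_of_antisymmetric (by fun_prop) hA hM hfive, hAL] with t ht hAt htI
  have hAbs := ht htI
  have hsplit := abs_add_le (L t - C / 2) (C / 2)
  rw [hAt htI] at hAbs
  rw [sub_add_cancel] at hsplit
  have hC : |C / 2| = |C| / 2 := by rw [abs_div, abs_two]
  linarith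

end Conclusion

lemma nine_mul_add_five_mul_le {a b : ℝ} (ha : 0 ≤ a) (hb : 0 ≤ b) :
    9 * a + 5 * b ≤ (1 + 16 / √3) * a + (1 + 8 / √3) * b := by
  have hsqrt : √3 ≤ 2 := Real.sqrt_le_iff.2 (by norm_num)
  have h16 : 8 ≤ 16 / √3 := (le_div_iff₀ (by positivity)).2 (by linarith)
  have h8 : 4 ≤ 8 / √3 := (le_div_iff₀ (by positivity)).2 (by linarith)
  gcongr <;> linarith

end SpenceAbel

open SpenceAbel

theorem perturbed_spence_abel_continuity_general {R₁ R₂ : ℝ × ℝ → ℝ} {C₁ C₂ M : ℝ} {L₁ L₂ : ℝ → ℝ}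
    (hL₁ : AEMeasurable L₁ (volume.restrict (Ioo 0 1)))
    (hL₂ : AEMeasurable L₂ (volume.restrict (Ioo 0 1)))
    (hsol₁ : SolvesAE R₁ C₁ L₁) (hsol₂ : SolvesAE R₂ C₂ L₂)
    (hM : ∀ᵐ p ∂(volume.restrict P2), |R₁ p - R₂ p| ≤ M) :
    ∀ᵐ x ∂(volume.restrict (Ioo (0 : ℝ) 1)), |L₁ x - L₂ x| ≤ 9 * M + 5 * |C₁ - C₂| := by
  have hfive : ∀ᵐ p ∂(volume.restrict P2), |fiveTerm (fun x => L₁ x - L₂ x) p| ≤ M := by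
    filter_upwards [hM, hsol₁.1, hsol₂.1] with p hp h₁ h₂
    rw [← h₁, ← h₂] at hp
    convert hp using 2
    rw [fiveTerm]
    ring
  have hrefl : ∀ᵐ x ∂(volume.restrict (Ioo (0 : ℝ) 1)),
      L₁ (1 - x) - L₂ (1 - x) = (C₁ - C₂) - (L₁ x - L₂ x) := by
    filter_upwards [hsol₁.2, hsol₂.2] with x h₁ h₂
    rw [h₁, h₂]
    ring
  rw [ae_restrict_iff' measurableSet_Ioo] at hrefl ⊢
  rw [ae_restrict_iff' isOpen_P2.measurableSet] at hfive
  exact ae_abs_le_of_reflection (hL₁.sub hL₂) hrefl hfive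

/-- **Continuity** (continuous dependence on the data) for the perturbed Spence–Abel system:
the essential supremum of `|L₁ - L₂|` over `(0,1)` is at most
`(1 + 16/√3)·(essential sup of |R₁ - R₂| over P₂) + (1 + 8/√3)·|C₁ - C₂|`
(stated via arbitrary essential bounds `M` for `|R₁ - R₂|`). -/
theorem perturbed_spence_abel_continuity (R₁ R₂ : ℝ × ℝ → ℝ)
    (hR₁ : AEMeasurable R₁ (volume.restrict P2)) (hR₂ : AEMeasurable R₂ (volume.restrict P2))
    (hR₁bdd : ∃ M : ℝ, ∀ᵐ p ∂(volume.restrict P2), |R₁ p| ≤ M)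
    (hR₂bdd : ∃ M : ℝ, ∀ᵐ p ∂(volume.restrict P2), |R₂ p| ≤ M)
    (h6₁ : SixTermAE R₁) (hsym₁ : SymmAE R₁) (h6₂ : SixTermAE R₂) (hsym₂ : SymmAE R₂)
    (C₁ C₂ : ℝ) (L₁ L₂ : ℝ → ℝ)
    (hL₁ : AEMeasurable L₁ (volume.restrict (Set.Ioo (0:ℝ) 1)))
    (hL₂ : AEMeasurable L₂ (volume.restrict (Set.Ioo (0:ℝ) 1)))
    (hsol₁ : SolvesAE R₁ C₁ L₁) (hsol₂ : SolvesAE R₂ C₂ L₂) :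
    ∀ M : ℝ, (∀ᵐ p ∂(volume.restrict P2), |R₁ p - R₂ p| ≤ M) →
      ∀ᵐ x ∂(volume.restrict (Set.Ioo (0:ℝ) 1)),
        |L₁ x - L₂ x| ≤ (1 + 16 / Real.sqrt 3) * M + (1 + 8 / Real.sqrt 3) * |C₁ - C₂| := by
  intro M hM
  have hM0 : 0 ≤ M := nonneg_of_ae_abs_le ((ae_restrict_iff' isOpen_P2.measurableSet).1 hM)
  filter_upwards [perturbed_spence_abel_continuity_general hL₁ hL₂ hsol₁ hsol₂ hM] with x hx
  exact hx.trans (nine_mul_add_five_mul_le hM0 (abs_nonneg _))
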